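/- Every Jordan net in S⁴, i.e., every 3-dimensional Jordan subalgebra L of (S⁴, •_U) with invertible unit U ∈ L, is congruent (L ↦ P L Pᵀ, P ∈ GL(4, ℂ)) to one of the following eight nets (each given as the span of three matrices, with E_{ij} the matrix units and J₂ = E₁₂+E₂₁, J₃ = E₁₃+E₂₂+E₃₁, J₄ = E₁₄+E₂₃+E₃₂+E₄₁): 1(a): span{E₁₁+E₂₂, E₃₃, E₄₄}; 1(b): {Diag(A, A) : A a symmetric 2×2 matrix}; 2(a1): span{E₁₂+E₂₁, E₁₁, E₃₃+E₄₄}; 2(a2): span{E₁₃+E₃₁+E₂₂, E₁₁, E₄₄}; 2(b): span{E₁₂+E₂₁, E₃₄+E₄₃, E₁₃+E₃₁}; 3(a): span{E₁₃+E₃₁+E₂₂+E₄₄, E₁₂+E₂₁, E₁₁}; 3(b1): span{J₄, E₁₁, E₂₂}; 3(b2): span{J₄, E₁₁, E₁₃+E₃₁}. -/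

import Mathlib

/-
A complex symmetric matrix is a product `Q Qᵀ`, so a congruence turns the unit into `U = 1`, and the
Jordan product into `(XY + YX) / 2`; idempotents of `L` are then orthogonal projections for the
bilinear form `x ⬝ᵥ y`.

If some `X ∈ L` has `X² ∉ span {1, X}`, then `L = span {1, X, X²}` and `X` is a root of a cubic.
Three distinct roots give three orthogonal idempotents (1a), a double root an idempotent and a
square-zero element annihilating each other (2a), a triple root a nilpotent of index three (3a).
Otherwise `X² ∈ span {1, X}` throughout, so `L` has a basis `1, x, y` with `x² = p`, `y² = 0` and
`xy + yx = α`: this is 1b if `α ≠ 0`, 2b if `α = 0 ≠ p`, and 3b if `α = p = 0`.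

In each case the ranks of the orthogonal projections add up to `4`, and a symmetric matrix of rank
`r` is a sum of `r` terms `u uᵀ`. The vectors `u`, completed by hyperbolic partners where they are
isotropic, form a basis of `ℂ⁴` in which `L` takes the listed form.
-/

open Matrix

noncomputable section

abbrev Mat (n : ℕ) := Matrix (Fin n) (Fin n) ℂ

/-- The Jordan product on symmetric matrices with unit `U`. -/
def jmul {n : ℕ} (U X Y : Mat n) : Mat n :=
  (1 / 2 : ℂ) • (X * U⁻¹ * Y + Y * U⁻¹ * X)

/-- Congruence by `P`, i.e. `X ↦ P X Pᵀ`, as a linear map. -/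
def congMap {n : ℕ} (P : Mat n) : Mat n →ₗ[ℂ] Mat n where
  toFun X := P * X * Pᵀ
  map_add' := by intros; simp [Matrix.mul_add, Matrix.add_mul]
  map_smul' := by intros; simp [Matrix.mul_smul, Matrix.smul_mul]

/-- Net 1(a): `span{E₁₁+E₂₂, E₃₃, E₄₄}`, i.e. `Diag(x·1₂, y, z)`. -/
def net1a : Submodule ℂ (Mat 4) := Submodule.span ℂ
  {!![(1:ℂ),0,0,0;0,1,0,0;0,0,0,0;0,0,0,0],
   !![(0:ℂ),0,0,0;0,0,0,0;0,0,1,0;0,0,0,0],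
   !![(0:ℂ),0,0,0;0,0,0,0;0,0,0,0;0,0,0,1]}

/-- Net 1(b): `{Diag(A, A) : A ∈ S²}`, the Kronecker product of `1₂` with `S²`. -/
def net1b : Submodule ℂ (Mat 4) := Submodule.span ℂ
  {!![(1:ℂ),0,0,0;0,0,0,0;0,0,1,0;0,0,0,0],
   !![(0:ℂ),1,0,0;1,0,0,0;0,0,0,1;0,0,1,0],
   !![(0:ℂ),0,0,0;0,1,0,0;0,0,0,0;0,0,0,1]}

/-- Net 2(a1): `span{E₁₂+E₂₁, E₁₁, E₃₃+E₄₄}`. -/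
def net2a1 : Submodule ℂ (Mat 4) := Submodule.span ℂ
  {!![(0:ℂ),1,0,0;1,0,0,0;0,0,0,0;0,0,0,0],
   !![(1:ℂ),0,0,0;0,0,0,0;0,0,0,0;0,0,0,0],
   !![(0:ℂ),0,0,0;0,0,0,0;0,0,1,0;0,0,0,1]}

/-- Net 2(a2): `span{E₁₃+E₃₁+E₂₂, E₁₁, E₄₄}`. -/
def net2a2 : Submodule ℂ (Mat 4) := Submodule.span ℂ
  {!![(0:ℂ),0,1,0;0,1,0,0;1,0,0,0;0,0,0,0],
   !![(1:ℂ),0,0,0;0,0,0,0;0,0,0,0;0,0,0,0],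
   !![(0:ℂ),0,0,0;0,0,0,0;0,0,0,0;0,0,0,1]}

/-- Net 2(b): `span{E₁₂+E₂₁, E₃₄+E₄₃, E₁₃+E₃₁}`. -/
def net2b : Submodule ℂ (Mat 4) := Submodule.span ℂ
  {!![(0:ℂ),1,0,0;1,0,0,0;0,0,0,0;0,0,0,0],
   !![(0:ℂ),0,0,0;0,0,0,0;0,0,0,1;0,0,1,0],
   !![(0:ℂ),0,1,0;0,0,0,0;1,0,0,0;0,0,0,0]}

/-- Net 3(a): `span{E₁₃+E₃₁+E₂₂+E₄₄, E₁₂+E₂₁, E₁₁}`. -/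
def net3a : Submodule ℂ (Mat 4) := Submodule.span ℂ
  {!![(0:ℂ),0,1,0;0,1,0,0;1,0,0,0;0,0,0,1],
   !![(0:ℂ),1,0,0;1,0,0,0;0,0,0,0;0,0,0,0],
   !![(1:ℂ),0,0,0;0,0,0,0;0,0,0,0;0,0,0,0]}

/-- Net 3(b1): `span{J₄, E₁₁, E₂₂}`. -/
def net3b1 : Submodule ℂ (Mat 4) := Submodule.span ℂ
  {!![(0:ℂ),0,0,1;0,0,1,0;0,1,0,0;1,0,0,0],
   !![(1:ℂ),0,0,0;0,0,0,0;0,0,0,0;0,0,0,0],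
   !![(0:ℂ),0,0,0;0,1,0,0;0,0,0,0;0,0,0,0]}

/-- Net 3(b2): `span{J₄, E₁₁, E₁₃+E₃₁}`. -/
def net3b2 : Submodule ℂ (Mat 4) := Submodule.span ℂ
  {!![(0:ℂ),0,0,1;0,0,1,0;0,1,0,0;1,0,0,0],
   !![(1:ℂ),0,0,0;0,0,0,0;0,0,0,0;0,0,0,0],
   !![(0:ℂ),0,1,0;0,0,0,0;1,0,0,0;0,0,0,0]}

section OuterProduct

variable {R n : Type*} [CommSemiring R]

/-- The symmetrised outer product `u vᵀ + v uᵀ`, the matrix of the polarisation of `u uᵀ`. -/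
def symMulVec (u v : n → R) : Matrix n n R :=
  vecMulVec u v + vecMulVec v u

theorem symMulVec_comm (u v : n → R) : symMulVec u v = symMulVec v u :=
  add_comm _ _

theorem isSymm_vecMulVec_self (u : n → R) : (vecMulVec u u).IsSymm :=
  transpose_vecMulVec u u

theorem isSymm_symMulVec (u v : n → R) : (symMulVec u v).IsSymm := by
  simp only [IsSymm, symMulVec, transpose_add, transpose_vecMulVec, add_comm]

variable [Fintype n]

theorem vecMulVec_self_mulVec (u x : n → R) : vecMulVec u u *ᵥ x = (u ⬝ᵥ x) • u := by
  rw [vecMulVec_mulVec, op_smul_eq_smul]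

theorem symMulVec_mulVec (u v x : n → R) :
    symMulVec u v *ᵥ x = (v ⬝ᵥ x) • u + (u ⬝ᵥ x) • v := by
  simp only [symMulVec, add_mulVec, vecMulVec_mulVec, op_smul_eq_smul]

theorem mulVec_dotProduct_of_isSymm {A : Matrix n n R} (hA : A.IsSymm) (x y : n → R) :
    A *ᵥ x ⬝ᵥ y = x ⬝ᵥ A *ᵥ y := by
  rw [dotProduct_mulVec, ← mulVec_transpose, hA.eq]

theorem vecMulVec_self_mul_of_isSymm {A : Matrix n n R} (hA : A.IsSymm) (u : n → R) :
    vecMulVec u u * A = vecMulVec u (A *ᵥ u) := by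
  rw [vecMulVec_mul, ← mulVec_transpose, hA.eq]

theorem symMulVec_mul_of_isSymm {A : Matrix n n R} (hA : A.IsSymm) (u v : n → R) :
    symMulVec u v * A = vecMulVec u (A *ᵥ v) + vecMulVec v (A *ᵥ u) := by
  simp only [symMulVec, add_mul, vecMulVec_mul, ← mulVec_transpose, hA.eq]

theorem mul_symMulVec (A : Matrix n n R) (u v : n → R) :
    A * symMulVec u v = vecMulVec (A *ᵥ u) v + vecMulVec (A *ᵥ v) u := by
  simp only [symMulVec, mul_add, mul_vecMulVec]

theorem mul_symMulVec_eq_zero {A : Matrix n n R} {u v : n → R} (hu : A *ᵥ u = 0)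
    (hv : A *ᵥ v = 0) : A * symMulVec u v = 0 := by
  rw [mul_symMulVec, hu, hv, zero_vecMulVec, zero_vecMulVec, add_zero]

end OuterProduct

section SymmetricMatrices

variable {K n : Type*} [Field K]

theorem eq_zero_of_vecMulVec_pair_combination_eq_zero [Finite n] {v l : n → K}
    (h : LinearIndependent K ![v, l]) {α β γ δ : K}
    (h0 : α • vecMulVec v v + β • vecMulVec v l + γ • vecMulVec l v + δ • vecMulVec l l = 0) :
    α = 0 ∧ β = 0 ∧ γ = 0 ∧ δ = 0 := by
  have := Fintype.ofFinite n
  rw [LinearIndependent.pair_iff] at h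
  have key (z : n → K) : α * (v ⬝ᵥ z) + β * (l ⬝ᵥ z) = 0 ∧ γ * (v ⬝ᵥ z) + δ * (l ⬝ᵥ z) = 0 := by
    refine h _ _ ?_
    have := congr($h0 *ᵥ z)
    simp only [add_mulVec, smul_mulVec, vecMulVec_mulVec, op_smul_eq_smul, zero_mulVec] at this
    rw [← this]
    module
  have h₁ : α • v + β • l = 0 := dotProduct_eq_zero _ fun z ↦ by
    simpa [add_dotProduct] using (key z).1
  have h₂ : γ • v + δ • l = 0 := dotProduct_eq_zero _ fun z ↦ by
    simpa [add_dotProduct] using (key z).2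
  exact ⟨(h _ _ h₁).1, (h _ _ h₁).2, h _ _ h₂⟩

variable [Fintype n]

theorem exists_dotProduct_mulVec_ne_zero [NeZero (2 : K)] {A : Matrix n n K} (hA : A.IsSymm)
    (hA0 : A ≠ 0) : ∃ p, p ⬝ᵥ A *ᵥ p ≠ 0 := by
  by_contra! h
  have polar (u v : n → K) : u ⬝ᵥ A *ᵥ v = 0 := by
    have huv := h (u + v)
    rw [mulVec_add, add_dotProduct, dotProduct_add, dotProduct_add, h, h,
      ← mulVec_dotProduct_of_isSymm hA v, dotProduct_comm _ u] at huv
    have h2 : 2 * (u ⬝ᵥ A *ᵥ v) = 0 := by linear_combination huv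
    exact (mul_eq_zero.1 h2).resolve_left two_ne_zero
  exact hA0 (mulVec_injective (funext fun v ↦ by
    rw [zero_mulVec]
    exact dotProduct_eq_zero _ fun u ↦ by rw [dotProduct_comm, polar]))

theorem exists_dotProduct_mulVec_eq_one [IsAlgClosed K] [NeZero (2 : K)] {A : Matrix n n K}
    (hA : A.IsSymm) (hA0 : A ≠ 0) : ∃ p, p ⬝ᵥ A *ᵥ p = 1 := by
  obtain ⟨p, hp⟩ := exists_dotProduct_mulVec_ne_zero hA hA0
  obtain ⟨s, hs⟩ := IsAlgClosed.exists_pow_nat_eq (p ⬝ᵥ A *ᵥ p) two_pos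
  refine ⟨s⁻¹ • p, ?_⟩
  rw [mulVec_smul, dotProduct_smul, smul_dotProduct, smul_eq_mul, smul_eq_mul, ← hs]
  have hs0 : s ≠ 0 := fun h ↦ hp (by simp [← hs, h])
  field_simp

theorem eq_zero_of_rank_eq_zero {A : Matrix n n K} (hA : A.rank = 0) : A = 0 :=
  mulVec_injective <| funext fun x ↦ by
    rw [zero_mulVec]
    have : A.mulVecLin = 0 := LinearMap.range_eq_bot.1 (Submodule.finrank_eq_zero.1 hA)
    exact congr($this x)

theorem rank_add_finrank_ker (A : Matrix n n K) :
    A.rank + Module.finrank K (LinearMap.ker A.mulVecLin) = Fintype.card n := by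
  rw [rank, LinearMap.finrank_range_add_finrank_ker, Module.finrank_fintype_fun_eq_card]

theorem rank_sub_vecMulVec_mulVec_lt {A : Matrix n n K} (hA : A.IsSymm) {p : n → K}
    (hp : p ⬝ᵥ A *ᵥ p = 1) : (A - vecMulVec (A *ᵥ p) (A *ᵥ p)).rank < A.rank := by
  set B := A - vecMulVec (A *ᵥ p) (A *ᵥ p)
  have hB (x : n → K) : B *ᵥ x = A *ᵥ x - (p ⬝ᵥ A *ᵥ x) • A *ᵥ p := by
    rw [sub_mulVec, vecMulVec_self_mulVec, mulVec_dotProduct_of_isSymm hA]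
  have hAp : A *ᵥ p ≠ 0 := fun h ↦ by simp [h] at hp
  have hker : LinearMap.ker A.mulVecLin < LinearMap.ker B.mulVecLin := by
    refine SetLike.lt_iff_le_and_exists.2 ⟨fun x hx ↦ ?_, p, ?_, hAp⟩
    · have hx : A *ᵥ x = 0 := hx
      simp [hB, hx]
    · simp [hB, hp]
  have := Submodule.finrank_lt_finrank_of_lt hker
  have := rank_add_finrank_ker A
  have := rank_add_finrank_ker B
  omega

theorem exists_eq_sum_vecMulVec_self_of_rank_le [IsAlgClosed K] [NeZero (2 : K)]
    {A : Matrix n n K} (hA : A.IsSymm) {r : ℕ} (hr : A.rank ≤ r) :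
    ∃ u : Fin r → n → K, A = ∑ i, vecMulVec (u i) (u i) := by
  induction r generalizing A with
  | zero => exact ⟨0, by simpa using eq_zero_of_rank_eq_zero (Nat.le_zero.1 hr)⟩
  | succ r ih =>
    obtain rfl | hA0 := eq_or_ne A 0
    · exact ⟨0, by simp⟩
    obtain ⟨p, hp⟩ := exists_dotProduct_mulVec_eq_one hA hA0
    have hlt := rank_sub_vecMulVec_mulVec_lt hA hp
    obtain ⟨u, hu⟩ := ih (hA.sub (isSymm_vecMulVec_self (A *ᵥ p))) (by omega)
    exact ⟨Fin.cons (A *ᵥ p) u, by simp [Fin.sum_univ_succ, ← hu]⟩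

theorem exists_eq_vecMulVec_self_of_rank_le_one [IsAlgClosed K] [NeZero (2 : K)]
    {A : Matrix n n K} (hA : A.IsSymm) (hr : A.rank ≤ 1) : ∃ u, A = vecMulVec u u := by
  obtain ⟨u, hu⟩ := exists_eq_sum_vecMulVec_self_of_rank_le hA hr
  exact ⟨u 0, by rw [hu, Fin.sum_univ_one]⟩

theorem exists_eq_vecMulVec_self_add_of_rank_le_two [IsAlgClosed K] [NeZero (2 : K)]
    {A : Matrix n n K} (hA : A.IsSymm) (hr : A.rank ≤ 2) :
    ∃ u v, A = vecMulVec u u + vecMulVec v v := by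
  obtain ⟨u, hu⟩ := exists_eq_sum_vecMulVec_self_of_rank_le hA hr
  exact ⟨u 0, u 1, by rw [hu, Fin.sum_univ_two]⟩

theorem exists_mul_transpose_eq [IsAlgClosed K] [NeZero (2 : K)] {m : ℕ}
    {A : Matrix (Fin m) (Fin m) K} (hA : A.IsSymm) :
    ∃ Q : Matrix (Fin m) (Fin m) K, Q * Qᵀ = A := by
  obtain ⟨u, hu⟩ := exists_eq_sum_vecMulVec_self_of_rank_le hA (rank_le_width A)
  refine ⟨(of u)ᵀ, ?_⟩
  ext i j
  simp [hu, mul_apply, Matrix.sum_apply, vecMulVec_apply]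

theorem rank_add_rank_add_rank_le_card {a b e : Matrix n n K} (hab : a * b = 0) (hae : a * e = 0)
    (heb : e * b = 0) (he : IsIdempotentElem e) : a.rank + b.rank + e.rank ≤ Fintype.card n := by
  have hdisj : LinearMap.range b.mulVecLin ⊓ LinearMap.range e.mulVecLin = ⊥ := by
    refine eq_bot_iff.2 ?_
    rintro _ ⟨⟨y, rfl⟩, z, hz⟩
    have hz : e *ᵥ z = b *ᵥ y := hz
    calc b *ᵥ y = e *ᵥ e *ᵥ z := by rw [mulVec_mulVec, he.eq, hz]
      _ = 0 := by rw [hz, mulVec_mulVec, heb, zero_mulVec]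
  have hle : LinearMap.range b.mulVecLin ⊔ LinearMap.range e.mulVecLin ≤
      LinearMap.ker a.mulVecLin := by
    refine sup_le ?_ ?_ <;> rintro _ ⟨y, rfl⟩ <;> simp [hab, hae]
  have hsup := Submodule.finrank_sup_add_finrank_inf_eq (LinearMap.range b.mulVecLin)
    (LinearMap.range e.mulVecLin)
  rw [hdisj, finrank_bot] at hsup
  have := Submodule.finrank_mono hle
  have := rank_add_finrank_ker a
  simp only [rank] at *
  omega

end SymmetricMatrices

section IsOrthProj

variable {K n : Type*} [Field K] [Fintype n]

theorem cast_rank_eq_trace_of_isIdempotentElem {f : Matrix n n K} (hf : IsIdempotentElem f) :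
    (f.rank : K) = f.trace := by
  classical
  have hf' : IsIdempotentElem (toLin' f) := hf.map (toLinAlgEquiv' (R := K) (n := n))
  rw [← trace_toLin'_eq, (LinearMap.IsIdempotentElem.isProj_range _ hf').trace]
  rfl

/-- Orthogonal projections for the bilinear form `x ⬝ᵥ y`: the symmetric idempotent matrices. -/
structure IsOrthProj (f : Matrix n n K) : Prop where
  isSymm : f.IsSymm
  isIdempotentElem : IsIdempotentElem f

namespace IsOrthProj

variable {f : Matrix n n K}

theorem one_sub [DecidableEq n] (hf : IsOrthProj f) : IsOrthProj (1 - f) :=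
  ⟨isSymm_one.sub hf.isSymm, hf.isIdempotentElem.one_sub⟩

theorem rank_add_rank_one_sub [DecidableEq n] [CharZero K] (hf : IsOrthProj f) :
    f.rank + (1 - f).rank = Fintype.card n := by
  have h := cast_rank_eq_trace_of_isIdempotentElem hf.one_sub.isIdempotentElem
  rw [trace_sub, trace_one, ← cast_rank_eq_trace_of_isIdempotentElem hf.isIdempotentElem] at h
  exact_mod_cast (by linear_combination h : (f.rank + (1 - f).rank : K) = Fintype.card n)

theorem exists_hyperbolic_partner [NeZero (2 : K)] (hf : IsOrthProj f) {v : n → K}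
    (hv0 : v ≠ 0) (hvv : v ⬝ᵥ v = 0) (hfv : f *ᵥ v = 0) :
    ∃ w, v ⬝ᵥ w = 1 ∧ w ⬝ᵥ w = 0 ∧ f *ᵥ w = 0 := by
  obtain ⟨x, hx⟩ : ∃ x, v ⬝ᵥ x ≠ 0 := by
    by_contra! h
    exact hv0 (dotProduct_eq_zero _ h)
  obtain ⟨y, hy⟩ : ∃ y, y = (v ⬝ᵥ x)⁻¹ • (x - f *ᵥ x) := ⟨_, rfl⟩
  have hfy : f *ᵥ y = 0 := by
    rw [hy, mulVec_smul, mulVec_sub, mulVec_mulVec, hf.isIdempotentElem.eq, sub_self, smul_zero]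
  have hvy : v ⬝ᵥ y = 1 := by
    rw [hy, dotProduct_smul, dotProduct_sub, ← mulVec_dotProduct_of_isSymm hf.isSymm, hfv,
      zero_dotProduct, sub_zero, smul_eq_mul, inv_mul_cancel₀ hx]
  have h2 : (2 : K) ≠ 0 := two_ne_zero
  refine ⟨y - (y ⬝ᵥ y / 2) • v, ?_, ?_, ?_⟩
  · rw [dotProduct_sub, dotProduct_smul, hvv, hvy, smul_zero, sub_zero]
  · simp only [dotProduct_sub, sub_dotProduct, dotProduct_smul, smul_dotProduct, hvv,
      dotProduct_comm y v, hvy, smul_eq_mul]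
    field_simp
    ring
  · rw [mulVec_sub, mulVec_smul, hfy, hfv, smul_zero, sub_zero]

end IsOrthProj

theorem symMulVec_mul_symMulVec {v w : n → K} (hvw : v ⬝ᵥ w = 1) (hvv : v ⬝ᵥ v = 0)
    (hww : w ⬝ᵥ w = 0) : symMulVec v w * symMulVec v w = symMulVec v w := by
  rw [symMulVec_mul_of_isSymm (isSymm_symMulVec v w)]
  rw [symMulVec_mulVec, symMulVec_mulVec, hww, hvw, hvv, dotProduct_comm, hvw]
  simp only [one_smul, zero_smul, add_zero, zero_add, symMulVec]

theorem isOrthProj_symMulVec {v w : n → K} (hvw : v ⬝ᵥ w = 1) (hvv : v ⬝ᵥ v = 0)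
    (hww : w ⬝ᵥ w = 0) : IsOrthProj (symMulVec v w) :=
  ⟨isSymm_symMulVec v w, symMulVec_mul_symMulVec hvw hvv hww⟩

theorem isOrthProj_vecMulVec_self {u : n → K} (hu : u ⬝ᵥ u = 1) : IsOrthProj (vecMulVec u u) :=
  ⟨isSymm_vecMulVec_self u, by
    rw [IsIdempotentElem, vecMulVec_mul_vecMulVec, hu, one_smul]⟩

theorem rank_symMulVec [CharZero K] {v w : n → K} (hvw : v ⬝ᵥ w = 1) (hvv : v ⬝ᵥ v = 0)
    (hww : w ⬝ᵥ w = 0) : (symMulVec v w).rank = 2 := by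
  have h := cast_rank_eq_trace_of_isIdempotentElem (symMulVec_mul_symMulVec hvw hvv hww)
  rw [symMulVec, trace_add, trace_vecMulVec, trace_vecMulVec, dotProduct_comm w v, hvw,
    one_add_one_eq_two] at h
  exact_mod_cast h

theorem rank_vecMulVec_self [CharZero K] {u : n → K} (hu : u ⬝ᵥ u = 1) :
    (vecMulVec u u).rank = 1 := by
  have h := cast_rank_eq_trace_of_isIdempotentElem (isOrthProj_vecMulVec_self hu).isIdempotentElem
  rw [trace_vecMulVec, hu] at h
  exact_mod_cast h

namespace IsOrthProj

variable {f g : Matrix n n K}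

theorem mul_eq_zero_comm (hf : IsOrthProj f) (hg : IsOrthProj g) (hfg : f * g = 0) : g * f = 0 := by
  rw [← hf.isSymm.eq, ← hg.isSymm.eq, ← transpose_mul, hfg, transpose_zero]

theorem add (hf : IsOrthProj f) (hg : IsOrthProj g) (hfg : f * g = 0) : IsOrthProj (f + g) :=
  ⟨hf.isSymm.add hg.isSymm, hf.isIdempotentElem.add hg.isIdempotentElem <| by
    rw [hfg, hf.mul_eq_zero_comm hg hfg, add_zero]⟩

theorem rank_add [CharZero K] (hf : IsOrthProj f) (hg : IsOrthProj g) (hfg : f * g = 0) :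
    (f + g).rank = f.rank + g.rank := by
  have h := cast_rank_eq_trace_of_isIdempotentElem (hf.add hg hfg).isIdempotentElem
  rw [trace_add, ← cast_rank_eq_trace_of_isIdempotentElem hf.isIdempotentElem,
    ← cast_rank_eq_trace_of_isIdempotentElem hg.isIdempotentElem] at h
  exact_mod_cast h

theorem eq_one_of_rank_eq_card [DecidableEq n] [CharZero K] (hf : IsOrthProj f)
    (hr : f.rank = Fintype.card n) : f = 1 := by
  have := hf.rank_add_rank_one_sub
  exact (sub_eq_zero.1 (eq_zero_of_rank_eq_zero (by omega))).symm

end IsOrthProj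

theorem IsOrthProj.exists_eq_symMulVec [CharZero K] {f : Matrix n n K}
    (hf : IsOrthProj f) (hr : f.rank = 2) {v : n → K} (hv0 : v ≠ 0) (hvv : v ⬝ᵥ v = 0)
    (hfv : f *ᵥ v = v) : ∃ w, v ⬝ᵥ w = 1 ∧ w ⬝ᵥ w = 0 ∧ f = symMulVec v w := by
  classical
  have hgv : (1 - f) *ᵥ v = 0 := by rw [sub_mulVec, one_mulVec, hfv, sub_self]
  obtain ⟨w, hvw, hww, hgw⟩ := hf.one_sub.exists_hyperbolic_partner hv0 hvv hgv
  have hs := isOrthProj_symMulVec hvw hvv hww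
  have hgs := mul_symMulVec_eq_zero hgv hgw
  have hone : 1 - f + symMulVec v w = 1 := (hf.one_sub.add hs hgs).eq_one_of_rank_eq_card <| by
    rw [hf.one_sub.rank_add hs hgs, rank_symMulVec hvw hvv hww, ← hf.rank_add_rank_one_sub, hr,
      add_comm]
  exact ⟨w, hvw, hww, by rw [eq_sub_of_add_eq' hone, sub_sub_cancel]⟩

theorem exists_symMulVec_add_symMulVec_eq_one [DecidableEq n] [CharZero K]
    (hn : Fintype.card n = 4) {v l : n → K} (hvl : LinearIndependent K ![v, l])
    (hvv : v ⬝ᵥ v = 0) (hll : l ⬝ᵥ l = 0) (hvl0 : v ⬝ᵥ l = 0) :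
    ∃ w m, symMulVec v w + symMulVec l m = 1 := by
  have hv0 : v ≠ 0 := hvl.ne_zero 0
  obtain ⟨w, hvw, hww, -⟩ := IsOrthProj.exists_hyperbolic_partner
    (f := (0 : Matrix n n K)) ⟨transpose_zero, .zero⟩ hv0 hvv (zero_mulVec v)
  set f := symMulVec v w
  have hf : IsOrthProj f := isOrthProj_symMulVec hvw hvv hww
  obtain ⟨c, hc⟩ : ∃ c, c = w ⬝ᵥ l := ⟨_, rfl⟩
  obtain ⟨k, hk⟩ : ∃ k, k = l - c • v := ⟨_, rfl⟩
  have hk0 : k ≠ 0 := fun h ↦ one_ne_zero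
    (LinearIndependent.pair_iff.1 hvl (-c) 1 (by rw [← h, hk]; module)).2
  have hvk : v ⬝ᵥ k = 0 := by rw [hk, dotProduct_sub, dotProduct_smul, hvl0, hvv]; simp
  have hkk : k ⬝ᵥ k = 0 := by
    nth_rw 1 [hk]
    rw [sub_dotProduct, smul_dotProduct, hvk, hk, dotProduct_sub, dotProduct_smul, hll,
      dotProduct_comm l, hvl0]
    simp
  have hwk : w ⬝ᵥ k = 0 := by
    rw [hk, dotProduct_sub, dotProduct_smul, ← hc, dotProduct_comm w, hvw]
    simp
  have hfk : f *ᵥ k = 0 := by rw [symMulVec_mulVec, hwk, hvk, zero_smul, zero_smul, add_zero]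
  obtain ⟨m, hkm, hmm, hfm⟩ := hf.exists_hyperbolic_partner hk0 hkk hfk
  have hfg : f * symMulVec k m = 0 := mul_symMulVec_eq_zero hfk hfm
  have hg := isOrthProj_symMulVec hkm hkk hmm
  have hone : f + symMulVec k m = 1 := (hf.add hg hfg).eq_one_of_rank_eq_card <| by
    rw [hf.rank_add hg hfg, rank_symMulVec hvw hvv hww, rank_symMulVec hkm hkk hmm, hn]
  refine ⟨w - c • m, m, ?_⟩
  rw [← hone, hk]
  simp only [f, symMulVec, vecMulVec_sub, sub_vecMulVec, smul_vecMulVec, vecMulVec_smul]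
  abel

theorem dotProduct_of_symMulVec_add_symMulVec_eq_one [DecidableEq n] {v l w m : n → K}
    (hvl : LinearIndependent K ![v, l]) (hvv : v ⬝ᵥ v = 0) (hll : l ⬝ᵥ l = 0)
    (hvl0 : v ⬝ᵥ l = 0) (h1 : symMulVec v w + symMulVec l m = 1) :
    v ⬝ᵥ w = 1 ∧ v ⬝ᵥ m = 0 ∧ l ⬝ᵥ w = 0 ∧ l ⬝ᵥ m = 1 := by
  rw [LinearIndependent.pair_iff] at hvl
  have expand (z : n → K) :
      (w ⬝ᵥ z) • v + (v ⬝ᵥ z) • w + ((m ⬝ᵥ z) • l + (l ⬝ᵥ z) • m) = z := by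
    rw [← symMulVec_mulVec, ← symMulVec_mulVec, ← add_mulVec, h1, one_mulVec]
  have hv := hvl (w ⬝ᵥ v - 1) (m ⬝ᵥ v) (by
    have := expand v
    rw [hvv, dotProduct_comm l, hvl0] at this
    linear_combination (norm := module) this)
  have hl := hvl (w ⬝ᵥ l) (m ⬝ᵥ l - 1) (by
    have := expand l
    rw [hvl0, hll] at this
    linear_combination (norm := module) this)
  exact ⟨by rw [dotProduct_comm, sub_eq_zero.1 hv.1], by rw [dotProduct_comm, hv.2],
    by rw [dotProduct_comm, hl.1], by rw [dotProduct_comm, sub_eq_zero.1 hl.2]⟩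

end IsOrthProj

section Congruence

variable {n : ℕ}

/-- Congruence of spaces of matrices: `L' = P L Pᵀ` for some invertible `P`. -/
def IsCongruentTo (L L' : Submodule ℂ (Mat n)) : Prop :=
  ∃ P : Mat n, IsUnit P.det ∧ L.map (congMap P) = L'

theorem congMap_apply (P X : Mat n) : congMap P X = P * X * Pᵀ := rfl

theorem congMap_comp (P Q : Mat n) : congMap P ∘ₗ congMap Q = congMap (P * Q) := by
  ext1 X
  simp only [LinearMap.comp_apply, congMap_apply, transpose_mul, Matrix.mul_assoc]

theorem congMap_one : congMap (1 : Mat n) = LinearMap.id := by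
  ext1 X
  simp [congMap_apply]

theorem congMap_inv_comp {P : Mat n} (hP : IsUnit P.det) :
    congMap P⁻¹ ∘ₗ congMap P = LinearMap.id := by
  rw [congMap_comp, nonsing_inv_mul _ hP, congMap_one]

theorem congMap_injective {P : Mat n} (hP : IsUnit P.det) : Function.Injective (congMap P) :=
  Function.LeftInverse.injective (g := congMap P⁻¹) <|
    LinearMap.congr_fun (congMap_inv_comp hP)

theorem isSymm_congMap (P : Mat n) {X : Mat n} (hX : X.IsSymm) : (congMap P X).IsSymm := by
  simp only [IsSymm, congMap_apply, transpose_mul, transpose_transpose, hX.eq, Matrix.mul_assoc]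

theorem congMap_jmul {P U : Mat n} (hP : IsUnit P.det) (X Y : Mat n) :
    congMap P (jmul U X Y) = jmul (congMap P U) (congMap P X) (congMap P Y) := by
  have hP' : IsUnit Pᵀ.det := by rwa [det_transpose]
  have key (A B : Mat n) :
      congMap P A * (congMap P U)⁻¹ * congMap P B = congMap P (A * U⁻¹ * B) := by
    simp only [congMap_apply, Matrix.mul_inv_rev, Matrix.mul_assoc]
    rw [mul_nonsing_inv_cancel_left _ _ hP', nonsing_inv_mul_cancel_left _ _ hP]
  simp only [jmul, map_smul, map_add, key]

theorem exists_congMap_eq_one {U : Mat n} (hU : IsUnit U.det) (hsymm : U.IsSymm) :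
    ∃ P : Mat n, IsUnit P.det ∧ congMap P U = 1 := by
  obtain ⟨Q, hQ⟩ := exists_mul_transpose_eq hsymm
  have hdet : IsUnit Q.det := isUnit_of_mul_isUnit_left (by rwa [← det_mul, hQ])
  refine ⟨Q⁻¹, isUnit_nonsing_inv_det _ hdet, ?_⟩
  have hdet' : IsUnit Qᵀ.det := by rwa [det_transpose]
  rw [congMap_apply, ← hQ, nonsing_inv_mul_cancel_left _ _ hdet, transpose_nonsing_inv,
    mul_nonsing_inv _ hdet']

namespace IsCongruentTo

variable {L L' L'' : Submodule ℂ (Mat n)}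

theorem trans (h : IsCongruentTo L L') (h' : IsCongruentTo L' L'') : IsCongruentTo L L'' := by
  obtain ⟨P, hP, rfl⟩ := h
  obtain ⟨Q, hQ, rfl⟩ := h'
  exact ⟨Q * P, by rw [det_mul]; exact hQ.mul hP, by rw [← congMap_comp, Submodule.map_comp]⟩

theorem of_map_le {P : Mat n} (hP : IsUnit P.det) (h : L'.map (congMap P) ≤ L)
    (hfin : Module.finrank ℂ L' = Module.finrank ℂ L) : IsCongruentTo L L' := by
  have heq : L'.map (congMap P) = L := Submodule.eq_of_le_of_finrank_eq h <| by
    rw [← hfin, (L'.equivMapOfInjective _ (congMap_injective hP)).finrank_eq]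
  refine ⟨P⁻¹, isUnit_nonsing_inv_det _ hP, ?_⟩
  rw [← heq, ← Submodule.map_comp, congMap_inv_comp hP, Submodule.map_id]

end IsCongruentTo

theorem congMap_transpose_of (F : Fin n → Fin n → ℂ) (M : Mat n) :
    congMap (of F)ᵀ M = ∑ i, ∑ j, M i j • vecMulVec (F i) (F j) := by
  ext k l
  simp only [congMap_apply, mul_apply, transpose_apply, of_apply, Matrix.sum_apply,
    Matrix.smul_apply, vecMulVec_apply, smul_eq_mul, Finset.sum_mul]
  rw [Finset.sum_comm]
  exact Finset.sum_congr rfl fun i _ ↦ Finset.sum_congr rfl fun j _ ↦ by ring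

theorem linearIndependent_of_dual_entries {ι m m' R : Type*} [Finite ι] [DecidableEq ι] [Ring R]
    {N : ι → Matrix m m' R} (r : ι → m) (c : ι → m')
    (h : ∀ i j, N j (r i) (c i) = if i = j then 1 else 0) : LinearIndependent R N := by
  have := Fintype.ofFinite ι
  rw [Fintype.linearIndependent_iff]
  intro g hg i
  have := congr($hg (r i) (c i))
  simpa [Matrix.sum_apply, h] using this

theorem isCongruentTo_span_of_frame {L : Submodule ℂ (Mat n)} (hL : Module.finrank ℂ L = 3)
    (F : Fin n → Fin n → ℂ) {E J N₁ N₂ N₃ X₁ X₂ X₃ : Mat n}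
    (hN : LinearIndependent ℂ ![N₁, N₂, N₃]) (hE : E = 1) (hX₁ : X₁ ∈ L) (hX₂ : X₂ ∈ L)
    (hX₃ : X₃ ∈ L) (hJ : congMap (of F)ᵀ J = E) (h₁ : congMap (of F)ᵀ N₁ = X₁)
    (h₂ : congMap (of F)ᵀ N₂ = X₂) (h₃ : congMap (of F)ᵀ N₃ = X₃) :
    IsCongruentTo L (Submodule.span ℂ {N₁, N₂, N₃}) := by
  have hdet : IsUnit (of F)ᵀ.det :=
    isUnit_of_mul_isUnit_left (y := J.det * (of F)ᵀᵀ.det) <| by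
      rw [← det_mul, ← det_mul, ← Matrix.mul_assoc, ← congMap_apply, hJ, hE, det_one]
      exact isUnit_one
  refine IsCongruentTo.of_map_le hdet ?_ ?_
  · rw [Submodule.map_span, Submodule.span_le]
    rintro _ ⟨M, rfl | rfl | rfl, rfl⟩
    exacts [h₁ ▸ hX₁, h₂ ▸ hX₂, h₃ ▸ hX₃]
  · have hrange : Set.range ![N₁, N₂, N₃] = {N₁, N₂, N₃} := by
      simp only [range_cons, range_empty, Set.union_empty, Set.singleton_union]
    rw [hL, ← hrange, finrank_span_eq_card hN, Fintype.card_fin]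

end Congruence

section Recognition

variable {L : Submodule ℂ (Mat 4)} {a b c d : Fin 4 → ℂ}

theorem isCongruentTo_net1a (hL : Module.finrank ℂ L = 3)
    (h1 : vecMulVec a a + vecMulVec b b + vecMulVec c c + vecMulVec d d = 1)
    (hab : vecMulVec a a + vecMulVec b b ∈ L) (hc : vecMulVec c c ∈ L) (hd : vecMulVec d d ∈ L) :
    IsCongruentTo L net1a := by
  refine isCongruentTo_span_of_frame (J := 1) hL
    ![a, b, c, d] (linearIndependent_of_dual_entries ![0, 2, 3] ![0, 2, 3] ?_)
    h1 hab hc hd ?_ ?_ ?_ ?_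
  · intro i j
    fin_cases i <;> fin_cases j <;> simp
  all_goals
    simp [congMap_transpose_of, Fin.sum_univ_four, one_apply]

theorem isCongruentTo_net1b (hL : Module.finrank ℂ L = 3)
    (h1 : vecMulVec a a + vecMulVec b b + vecMulVec c c + vecMulVec d d = 1)
    (hac : vecMulVec a a + vecMulVec c c ∈ L) (habcd : symMulVec a b + symMulVec c d ∈ L)
    (hbd : vecMulVec b b + vecMulVec d d ∈ L) : IsCongruentTo L net1b := by
  refine isCongruentTo_span_of_frame (J := 1) hL
    ![a, b, c, d] (linearIndependent_of_dual_entries ![0, 0, 1] ![0, 1, 1] ?_)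
    h1 hac habcd hbd ?_ ?_ ?_ ?_
  · intro i j
    fin_cases i <;> fin_cases j <;> simp
  all_goals
    simp [congMap_transpose_of, Fin.sum_univ_four, symMulVec, one_apply] <;> abel

theorem isCongruentTo_net2a1 (hL : Module.finrank ℂ L = 3)
    (h1 : symMulVec a b + vecMulVec c c + vecMulVec d d = 1)
    (hab : symMulVec a b ∈ L) (ha : vecMulVec a a ∈ L) (hcd : vecMulVec c c + vecMulVec d d ∈ L) :
    IsCongruentTo L net2a1 := by
  refine isCongruentTo_span_of_frame (J := !![0, 1, 0, 0; 1, 0, 0, 0; 0, 0, 1, 0; 0, 0, 0, 1]) hL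
    ![a, b, c, d] (linearIndependent_of_dual_entries ![0, 0, 2] ![1, 0, 2] ?_)
    h1 hab ha hcd ?_ ?_ ?_ ?_
  · intro i j
    fin_cases i <;> fin_cases j <;> simp
  all_goals
    simp [congMap_transpose_of, Fin.sum_univ_four, symMulVec]

theorem isCongruentTo_net2a2 (hL : Module.finrank ℂ L = 3)
    (h1 : symMulVec a c + vecMulVec b b + vecMulVec d d = 1)
    (hacb : symMulVec a c + vecMulVec b b ∈ L) (ha : vecMulVec a a ∈ L) (hd : vecMulVec d d ∈ L) :
    IsCongruentTo L net2a2 := by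
  refine isCongruentTo_span_of_frame (J := !![0, 0, 1, 0; 0, 1, 0, 0; 1, 0, 0, 0; 0, 0, 0, 1]) hL
    ![a, b, c, d] (linearIndependent_of_dual_entries ![0, 0, 3] ![2, 0, 3] ?_)
    h1 hacb ha hd ?_ ?_ ?_ ?_
  · intro i j
    fin_cases i <;> fin_cases j <;> simp
  all_goals
    simp [congMap_transpose_of, Fin.sum_univ_four, symMulVec] <;> abel

theorem isCongruentTo_net2b (hL : Module.finrank ℂ L = 3)
    (h1 : symMulVec a b + symMulVec c d = 1)
    (hab : symMulVec a b ∈ L) (hcd : symMulVec c d ∈ L) (hac : symMulVec a c ∈ L) :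
    IsCongruentTo L net2b := by
  refine isCongruentTo_span_of_frame (J := !![0, 1, 0, 0; 1, 0, 0, 0; 0, 0, 0, 1; 0, 0, 1, 0]) hL
    ![a, b, c, d] (linearIndependent_of_dual_entries ![0, 2, 0] ![1, 3, 2] ?_)
    h1 hab hcd hac ?_ ?_ ?_ ?_
  · intro i j
    fin_cases i <;> fin_cases j <;> simp
  all_goals
    simp [congMap_transpose_of, Fin.sum_univ_four, symMulVec] <;> abel

theorem isCongruentTo_net3a (hL : Module.finrank ℂ L = 3)
    (h1 : symMulVec a c + vecMulVec b b + vecMulVec d d = 1)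
    (hone : 1 ∈ L) (hab : symMulVec a b ∈ L) (ha : vecMulVec a a ∈ L) :
    IsCongruentTo L net3a := by
  rw [← h1] at hone
  refine isCongruentTo_span_of_frame (J := !![0, 0, 1, 0; 0, 1, 0, 0; 1, 0, 0, 0; 0, 0, 0, 1]) hL
    ![a, b, c, d] (linearIndependent_of_dual_entries ![0, 0, 0] ![2, 1, 0] ?_)
    h1 hone hab ha ?_ ?_ ?_ ?_
  · intro i j
    fin_cases i <;> fin_cases j <;> simp
  all_goals
    simp [congMap_transpose_of, Fin.sum_univ_four, symMulVec] <;> abel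

theorem isCongruentTo_net3b1 (hL : Module.finrank ℂ L = 3)
    (h1 : symMulVec a d + symMulVec b c = 1)
    (hone : 1 ∈ L) (ha : vecMulVec a a ∈ L) (hb : vecMulVec b b ∈ L) :
    IsCongruentTo L net3b1 := by
  rw [← h1] at hone
  refine isCongruentTo_span_of_frame (J := !![0, 0, 0, 1; 0, 0, 1, 0; 0, 1, 0, 0; 1, 0, 0, 0]) hL
    ![a, b, c, d] (linearIndependent_of_dual_entries ![0, 0, 1] ![3, 0, 1] ?_)
    h1 hone ha hb ?_ ?_ ?_ ?_
  · intro i j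
    fin_cases i <;> fin_cases j <;> simp
  all_goals
    simp [congMap_transpose_of, Fin.sum_univ_four, symMulVec] <;> abel

theorem isCongruentTo_net3b2 (hL : Module.finrank ℂ L = 3)
    (h1 : symMulVec a d + symMulVec b c = 1)
    (hone : 1 ∈ L) (ha : vecMulVec a a ∈ L) (hac : symMulVec a c ∈ L) :
    IsCongruentTo L net3b2 := by
  rw [← h1] at hone
  refine isCongruentTo_span_of_frame (J := !![0, 0, 0, 1; 0, 0, 1, 0; 0, 1, 0, 0; 1, 0, 0, 0]) hL
    ![a, b, c, d] (linearIndependent_of_dual_entries ![0, 0, 0] ![3, 0, 2] ?_)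
    h1 hone ha hac ?_ ?_ ?_ ?_
  · intro i j
    fin_cases i <;> fin_cases j <;> simp
  all_goals
    simp [congMap_transpose_of, Fin.sum_univ_four, symMulVec] <;> abel

end Recognition

section DiagonalizableCase

variable {L : Submodule ℂ (Mat 4)}

theorem isCongruentTo_net1a_of_rank_eq_two (hL : Module.finrank ℂ L = 3) {e f g : Mat 4}
    (he : IsOrthProj e) (hf : IsOrthProj f) (hg : IsOrthProj g) (hsum : e + f + g = 1)
    (heL : e ∈ L) (hfL : f ∈ L) (hgL : g ∈ L) (her : e.rank = 2) (hfr : f.rank = 1)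
    (hgr : g.rank = 1) : IsCongruentTo L net1a := by
  obtain ⟨a, b, rfl⟩ := exists_eq_vecMulVec_self_add_of_rank_le_two he.isSymm her.le
  obtain ⟨c, rfl⟩ := exists_eq_vecMulVec_self_of_rank_le_one hf.isSymm hfr.le
  obtain ⟨d, rfl⟩ := exists_eq_vecMulVec_self_of_rank_le_one hg.isSymm hgr.le
  exact isCongruentTo_net1a hL hsum heL hfL hgL

theorem isCongruentTo_net1a_of_isOrthProj (hL : Module.finrank ℂ L = 3) {e f g : Mat 4}
    (he : IsOrthProj e) (hf : IsOrthProj f) (hg : IsOrthProj g) (hsum : e + f + g = 1)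
    (heL : e ∈ L) (hfL : f ∈ L) (hgL : g ∈ L) (he0 : e ≠ 0) (hf0 : f ≠ 0) (hg0 : g ≠ 0) :
    IsCongruentTo L net1a := by
  have hrank : e.rank + f.rank + g.rank = 4 := by
    have h := congr(trace $hsum)
    simp only [trace_add, trace_one, Fintype.card_fin,
      ← cast_rank_eq_trace_of_isIdempotentElem he.isIdempotentElem,
      ← cast_rank_eq_trace_of_isIdempotentElem hf.isIdempotentElem,
      ← cast_rank_eq_trace_of_isIdempotentElem hg.isIdempotentElem] at h
    exact_mod_cast h
  have he1 := mt eq_zero_of_rank_eq_zero he0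
  have hf1 := mt eq_zero_of_rank_eq_zero hf0
  have hg1 := mt eq_zero_of_rank_eq_zero hg0
  obtain h | h | h : e.rank = 2 ∨ f.rank = 2 ∨ g.rank = 2 := by omega
  · exact isCongruentTo_net1a_of_rank_eq_two hL he hf hg hsum heL hfL hgL h (by omega) (by omega)
  · exact isCongruentTo_net1a_of_rank_eq_two hL hf he hg (by rw [← hsum, add_comm f])
      hfL heL hgL h (by omega) (by omega)
  · exact isCongruentTo_net1a_of_rank_eq_two hL hg he hf (by rw [← hsum]; abel)
      hgL heL hfL h (by omega) (by omega)

theorem isCongruentTo_net1b_of_involution (hL : Module.finrank ℂ L = 3) {e r : Mat 4}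
    (he : IsOrthProj e) (hr : r.IsSymm) (hrr : r * r = 1) (her : e * r + r * e = r)
    (h1L : 1 ∈ L) (heL : e ∈ L) (hrL : r ∈ L) : IsCongruentTo L net1b := by
  have hconj : r * e * r = 1 - e := by
    rw [← hrr, Matrix.mul_assoc, eq_sub_of_add_eq her, mul_sub, ← Matrix.mul_assoc r r e, hrr,
      Matrix.one_mul]
  have hconj' : r * (1 - e) * r = e := by
    rw [mul_sub, sub_mul, Matrix.mul_one, hrr, hconj, sub_sub_cancel]
  have hle : (1 - e).rank ≤ e.rank :=
    hconj ▸ (rank_mul_le_left _ _).trans (rank_mul_le_right _ _)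
  have hge : e.rank ≤ (1 - e).rank := by
    conv_lhs => rw [← hconj']
    exact (rank_mul_le_left _ _).trans (rank_mul_le_right _ _)
  have hadd := he.rank_add_rank_one_sub
  rw [Fintype.card_fin] at hadd
  obtain ⟨a, b, hab⟩ := exists_eq_vecMulVec_self_add_of_rank_le_two he.isSymm (by omega)
  have hsub : vecMulVec (r *ᵥ a) (r *ᵥ a) + vecMulVec (r *ᵥ b) (r *ᵥ b) = 1 - e := by
    rw [← hconj, hab, mul_add, add_mul]
    simp only [mul_vecMulVec, vecMulVec_mul, ← mulVec_transpose, hr.eq]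
  have hmix : symMulVec a (r *ᵥ a) + symMulVec b (r *ᵥ b) = r := by
    conv_rhs => rw [← her, hab]
    simp only [add_mul, mul_add, vecMulVec_self_mul_of_isSymm hr, mul_vecMulVec, symMulVec]
    abel
  refine isCongruentTo_net1b hL (a := a) (b := r *ᵥ a) (c := b) (d := r *ᵥ b) ?_
    (hab ▸ heL) (by rwa [hmix]) (by rw [hsub]; exact L.sub_mem h1L heL)
  calc _ = vecMulVec a a + vecMulVec b b +
        (vecMulVec (r *ᵥ a) (r *ᵥ a) + vecMulVec (r *ᵥ b) (r *ᵥ b)) := by abel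
    _ = 1 := by rw [hsub, ← hab, add_sub_cancel]

end DiagonalizableCase

section NilpotentCases

variable {K n : Type*} [Field K] [Fintype n]

theorem dotProduct_self_eq_zero_of_vecMulVec_self_mul_self {u : n → K}
    (h : vecMulVec u u * vecMulVec u u = 0) : u ⬝ᵥ u = 0 := by
  obtain rfl | hu0 := eq_or_ne u 0
  · exact zero_dotProduct 0
  · rw [vecMulVec_mul_vecMulVec, vecMulVec_smul, smul_eq_zero] at h
    exact h.resolve_right (vecMulVec_ne_zero hu0 hu0)

theorem transpose_mul_of_isSymm {x y : Matrix n n K} (hx : x.IsSymm) (hy : y.IsSymm) :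
    (x * y)ᵀ = y * x := by
  rw [transpose_mul, hx.eq, hy.eq]

theorem mul_ne_zero_of_mul_add_mul_eq {x y : Matrix n n K} (hx : x.IsSymm) (hy : y.IsSymm)
    (hy0 : y ≠ 0) (hxy : x * y + y * x = y) : x * y ≠ 0 := fun h ↦ hy0 <| by
  rw [← hxy, ← transpose_mul_of_isSymm hx hy, h, transpose_zero, add_zero]

theorem mulVec_mulVec_of_mul_add_mul_eq {e y : Matrix n n K} (hey : e * y + y * e = y)
    (z : n → K) : e *ᵥ y *ᵥ z = y *ᵥ z - y *ᵥ e *ᵥ z := by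
  have := congr($hey *ᵥ z)
  rw [add_mulVec, ← mulVec_mulVec, ← mulVec_mulVec] at this
  exact eq_sub_of_add_eq this

theorem IsOrthProj.exists_isotropic_of_mul_add_mul_eq {e y : Matrix n n K} (he : IsOrthProj e)
    (hy : y.IsSymm) (hy0 : y ≠ 0) (hyy : y * y = 0) (hey : e * y + y * e = y) :
    ∃ v, v ≠ 0 ∧ v ⬝ᵥ v = 0 ∧ e *ᵥ v = v ∧ y *ᵥ v = 0 := by
  obtain ⟨z, hz⟩ : ∃ z, e *ᵥ y *ᵥ z ≠ 0 := by
    by_contra! h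
    exact mul_ne_zero_of_mul_add_mul_eq he.isSymm hy hy0 hey <| mulVec_injective <| funext
      fun z ↦ by rw [zero_mulVec, ← mulVec_mulVec, h]
  obtain ⟨v, hv⟩ : ∃ v, v = e *ᵥ y *ᵥ z := ⟨_, rfl⟩
  have hev : e *ᵥ v = v := by rw [hv, mulVec_mulVec, he.isIdempotentElem.eq]
  have hyyz (x : n → K) : y *ᵥ y *ᵥ x = 0 := by rw [mulVec_mulVec, hyy, zero_mulVec]
  have hyv : y *ᵥ v = 0 := by
    have h := mulVec_mulVec_of_mul_add_mul_eq hey (y *ᵥ z)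
    rwa [hyyz, mulVec_zero, zero_sub, ← hv, eq_comm, neg_eq_zero] at h
  refine ⟨v, hv ▸ hz, ?_, hev, hyv⟩
  nth_rw 1 [hv]
  rw [mulVec_dotProduct_of_isSymm he.isSymm, hev, mulVec_dotProduct_of_isSymm hy, hyv,
    dotProduct_zero]

theorem IsOrthProj.rank_add_two_le_card {e y : Matrix n n K} (he : IsOrthProj e) (hy : y.IsSymm)
    (hy0 : y ≠ 0) (hyy : y * y = 0) (hey : e * y + y * e = y) :
    e.rank + 2 ≤ Fintype.card n := by
  have hidem : e * e = e := he.isIdempotentElem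
  have heye : e * y * e = 0 := by
    have := congr(e * $hey)
    rwa [mul_add, ← mul_assoc, hidem, add_eq_left, ← mul_assoc] at this
  have hrank := rank_add_rank_add_rank_le_card (a := e * y) (b := y * e)
    (by rw [mul_assoc, ← mul_assoc y, hyy, zero_mul, mul_zero]) heye
    (by rw [← mul_assoc, heye]) hidem
  have hpos := mt eq_zero_of_rank_eq_zero (mul_ne_zero_of_mul_add_mul_eq he.isSymm hy hy0 hey)
  rw [← transpose_mul_of_isSymm he.isSymm hy, rank_transpose] at hrank
  omega

variable {L : Submodule ℂ (Mat 4)}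

theorem isCongruentTo_net2a_of_isOrthProj (hL : Module.finrank ℂ L = 3) {f x : Mat 4}
    (hf : IsOrthProj f) (hf0 : f ≠ 0) (hx : x.IsSymm) (hx0 : x ≠ 0) (hxx : x * x = 0)
    (hfx : f * x = 0) (h1L : 1 ∈ L) (hfL : f ∈ L) (hxL : x ∈ L) :
    IsCongruentTo L net2a1 ∨ IsCongruentTo L net2a2 := by
  have hxf : x * f = 0 := by
    rw [← transpose_mul_of_isSymm hf.isSymm hx, hfx, transpose_zero]
  have hrank := rank_add_rank_add_rank_le_card hxx hxf hfx hf.isIdempotentElem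
  have hf1 := mt eq_zero_of_rank_eq_zero hf0
  rw [Fintype.card_fin] at hrank
  obtain ⟨u, rfl⟩ := exists_eq_vecMulVec_self_of_rank_le_one hx (by omega)
  have hu0 : u ≠ 0 := by rintro rfl; exact hx0 (vecMulVec_zero 0)
  have huu := dotProduct_self_eq_zero_of_vecMulVec_self_mul_self hxx
  have hfu : f *ᵥ u = 0 := by
    rw [mul_vecMulVec, vecMulVec_eq_zero] at hfx
    exact hfx.resolve_right hu0
  obtain ⟨w, huw, hww, hfw⟩ := hf.exists_hyperbolic_partner hu0 huu hfu
  have hfs := mul_symMulVec_eq_zero hfu hfw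
  have hs := isOrthProj_symMulVec huw huu hww
  have hrest := (hf.add hs hfs).one_sub
  have hrest_rank := (hf.add hs hfs).rank_add_rank_one_sub
  rw [hf.rank_add hs hfs, rank_symMulVec huw huu hww, Fintype.card_fin] at hrest_rank
  obtain hfr | hfr : f.rank = 1 ∨ f.rank = 2 := by omega
  · obtain ⟨b, hb⟩ := exists_eq_vecMulVec_self_of_rank_le_one hrest.isSymm (by omega)
    obtain ⟨d, rfl⟩ := exists_eq_vecMulVec_self_of_rank_le_one hf.isSymm hfr.le
    have hsum : symMulVec u w + vecMulVec b b = 1 - vecMulVec d d := by rw [← hb]; abel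
    exact .inr <| isCongruentTo_net2a2 hL (by rw [hsum, sub_add_cancel])
      (hsum ▸ L.sub_mem h1L hfL) hxL hfL
  · have hsum : symMulVec u w = 1 - f := by
      have := eq_zero_of_rank_eq_zero (A := 1 - (f + symMulVec u w)) (by omega)
      exact eq_sub_of_add_eq' (sub_eq_zero.1 this).symm
    obtain ⟨c, d, rfl⟩ := exists_eq_vecMulVec_self_add_of_rank_le_two hf.isSymm hfr.le
    exact .inl <| isCongruentTo_net2a1 hL (by rw [add_assoc, hsum, sub_add_cancel])
      (hsum ▸ L.sub_mem h1L hfL) hxL hfL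

theorem isCongruentTo_net2b_of_isOrthProj (hL : Module.finrank ℂ L = 3) {e y : Mat 4}
    (he : IsOrthProj e) (hy : y.IsSymm) (hy0 : y ≠ 0) (hyy : y * y = 0)
    (hey : e * y + y * e = y) (h1L : 1 ∈ L) (heL : e ∈ L) (hyL : y ∈ L) :
    IsCongruentTo L net2b := by
  have hey' : (1 - e) * y + y * (1 - e) = y := by
    rw [sub_mul, mul_sub, one_mul, mul_one, sub_add_sub_comm, hey, add_sub_cancel_right]
  have hle := he.rank_add_two_le_card hy hy0 hyy hey
  have hle' := he.one_sub.rank_add_two_le_card hy hy0 hyy hey'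
  have hadd := he.rank_add_rank_one_sub
  rw [Fintype.card_fin] at hle hle' hadd
  obtain ⟨v, hv0, hvv, hev, hyv⟩ := he.exists_isotropic_of_mul_add_mul_eq hy hy0 hyy hey
  obtain ⟨w, hvw, hww, hew⟩ := he.exists_eq_symMulVec (by omega) hv0 hvv hev
  have hy_eq : y = symMulVec v (y *ᵥ w) := by
    conv_lhs => rw [← hey, hew, mul_symMulVec, symMulVec_mul_of_isSymm hy, hyv]
    simp [symMulVec]
  have hu0 : y *ᵥ w ≠ 0 := fun h ↦ hy0 (by rw [hy_eq, h]; simp [symMulVec])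
  have huu : y *ᵥ w ⬝ᵥ y *ᵥ w = 0 := by
    rw [mulVec_dotProduct_of_isSymm hy, mulVec_mulVec, hyy, zero_mulVec, dotProduct_zero]
  have heu : (1 - e) *ᵥ y *ᵥ w = y *ᵥ w := by
    have hw : e *ᵥ w = w := by
      rw [hew, symMulVec_mulVec, hww, hvw, zero_smul, one_smul, zero_add]
    rw [mulVec_mulVec_of_mul_add_mul_eq hey', sub_mulVec, one_mulVec, hw, sub_self, mulVec_zero,
      sub_zero]
  obtain ⟨u', -, -, heu'⟩ := he.one_sub.exists_eq_symMulVec (by omega) hu0 huu heu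
  exact isCongruentTo_net2b hL (by rw [← hew, ← heu', add_sub_cancel]) (hew ▸ heL)
    (heu' ▸ L.sub_mem h1L heL) (hy_eq ▸ hyL)

end NilpotentCases

section CubeZero

variable {K n : Type*} [Field K] [Fintype n]

theorem exists_isotropic_cyclic_vector [IsAlgClosed K] [NeZero (2 : K)] {x : Matrix n n K}
    (hx : x.IsSymm) (hx2 : x * x ≠ 0) (hx3 : x * x * x = 0) :
    ∃ p, p ⬝ᵥ p = 0 ∧ p ⬝ᵥ x *ᵥ p = 0 ∧ p ⬝ᵥ x *ᵥ x *ᵥ p = 1 := by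
  have hxxx (z : n → K) : x *ᵥ x *ᵥ x *ᵥ z = 0 := by
    rw [mulVec_mulVec, mulVec_mulVec, hx3, zero_mulVec]
  have h2 : (2 : K) ≠ 0 := two_ne_zero
  obtain ⟨p, hp⟩ := exists_dotProduct_mulVec_eq_one (A := x * x)
    (by rw [IsSymm, transpose_mul, hx.eq]) hx2
  rw [← mulVec_mulVec] at hp
  -- Subtracting a multiple of `x p` kills `p ⬝ᵥ x p`, then one of `x² p` kills `p ⬝ᵥ p`;
  -- as `x³ = 0`, neither step disturbs `p ⬝ᵥ x² p`.
  obtain ⟨p₁, hp₁⟩ : ∃ p₁, p₁ = p - (p ⬝ᵥ x *ᵥ p / 2) • x *ᵥ p := ⟨_, rfl⟩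
  have hp₁x : p₁ ⬝ᵥ x *ᵥ p₁ = 0 := by
    simp only [hp₁, mulVec_sub, mulVec_smul, dotProduct_sub, sub_dotProduct, dotProduct_smul,
      smul_dotProduct, mulVec_dotProduct_of_isSymm hx, hxxx, hp, dotProduct_zero, smul_eq_mul]
    field_simp
    ring
  have hp₁xx : p₁ ⬝ᵥ x *ᵥ x *ᵥ p₁ = 1 := by
    simp only [hp₁, mulVec_sub, mulVec_smul, dotProduct_sub, sub_dotProduct, dotProduct_smul,
      smul_dotProduct, mulVec_dotProduct_of_isSymm hx, hxxx, hp, dotProduct_zero, smul_eq_mul,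
      mul_zero, sub_zero]
  refine ⟨p₁ - (p₁ ⬝ᵥ p₁ / 2) • x *ᵥ x *ᵥ p₁, ?_, ?_, ?_⟩ <;>
    simp only [mulVec_sub, mulVec_smul, dotProduct_sub, sub_dotProduct, dotProduct_smul,
      smul_dotProduct, mulVec_dotProduct_of_isSymm hx, hxxx, hp₁x, hp₁xx, dotProduct_zero,
      smul_eq_mul, smul_zero, mulVec_zero, mul_zero, mul_one, sub_zero]
  field_simp
  ring

theorem IsOrthProj.exists_eq_vecMulVec_self [IsAlgClosed K] [CharZero K] {g : Matrix n n K}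
    (hg : IsOrthProj g) (hr : g.rank = 1) : ∃ d, d ⬝ᵥ d = 1 ∧ g = vecMulVec d d := by
  obtain ⟨d, rfl⟩ := exists_eq_vecMulVec_self_of_rank_le_one hg.isSymm hr.le
  have h := cast_rank_eq_trace_of_isIdempotentElem hg.isIdempotentElem
  rw [hr, trace_vecMulVec, Nat.cast_one] at h
  exact ⟨d, h.symm, rfl⟩

theorem eq_symMulVec_of_cube_eq_zero {v p q d : n → K} [DecidableEq n] {x : Matrix n n K}
    (hx : x.IsSymm) (hx3 : x * x * x = 0) (hq : q = x *ᵥ p) (hv : v = x *ᵥ q)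
    (hsum : symMulVec v p + vecMulVec q q + vecMulVec d d = 1) (hd : d ⬝ᵥ d = 1) :
    x = symMulVec v q := by
  have hxxx (z : n → K) : x *ᵥ x *ᵥ x *ᵥ z = 0 := by
    rw [mulVec_mulVec, mulVec_mulVec, hx3, zero_mulVec]
  have hxv : x *ᵥ v = 0 := by rw [hv, hq, hxxx]
  have hleft : x = symMulVec v q + vecMulVec (x *ᵥ d) d := by
    conv_lhs => rw [← Matrix.mul_one x, ← hsum]
    rw [mul_add, mul_add, mul_symMulVec, mul_vecMulVec, mul_vecMulVec, hxv, ← hq, ← hv,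
      zero_vecMulVec, zero_add, add_comm (vecMulVec q v), symMulVec]
  have hright : x = symMulVec v q + vecMulVec d (x *ᵥ d) := by
    conv_lhs => rw [← Matrix.one_mul x, ← hsum]
    rw [add_mul, add_mul, symMulVec_mul_of_isSymm hx, vecMulVec_self_mul_of_isSymm hx,
      vecMulVec_self_mul_of_isSymm hx, hxv, ← hq, ← hv, vecMulVec_zero, add_zero, symMulVec]
  obtain ⟨c, hc⟩ : ∃ c, c = x *ᵥ d ⬝ᵥ d := ⟨_, rfl⟩
  have hxd : x *ᵥ d = c • d := by
    have := congr($(add_left_cancel (hleft.symm.trans hright)) *ᵥ d)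
    rwa [vecMulVec_mulVec, vecMulVec_mulVec, hd, op_smul_eq_smul, op_smul_eq_smul, one_smul,
      ← hc] at this
  have hc0 : c = 0 := by
    have h := congr(d ⬝ᵥ $(hxxx d))
    rw [hxd, mulVec_smul, mulVec_smul, hxd, mulVec_smul, hxd] at h
    simpa [hd] using h
  rw [hleft, hxd, hc0, zero_smul, zero_vecMulVec, add_zero]

end CubeZero

theorem isCongruentTo_net3a_of_nilpotent {L : Submodule ℂ (Mat 4)}
    (hL : Module.finrank ℂ L = 3) {x : Mat 4} (hx : x.IsSymm) (hx2 : x * x ≠ 0)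
    (hx3 : x * x * x = 0) (h1L : 1 ∈ L) (hxL : x ∈ L) (hxxL : x * x ∈ L) :
    IsCongruentTo L net3a := by
  obtain ⟨p, hpp, hpq, hpv⟩ := exists_isotropic_cyclic_vector hx hx2 hx3
  obtain ⟨q, hq⟩ : ∃ q, q = x *ᵥ p := ⟨_, rfl⟩
  obtain ⟨v, hv⟩ : ∃ v, v = x *ᵥ q := ⟨_, rfl⟩
  rw [← hq] at hpq hpv
  rw [← hv] at hpv
  have hxv : x *ᵥ v = 0 := by
    rw [hv, hq, mulVec_mulVec, mulVec_mulVec, hx3, zero_mulVec]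
  have hqq : q ⬝ᵥ q = 1 := by
    nth_rw 1 [hq]; rw [mulVec_dotProduct_of_isSymm hx, ← hv, hpv]
  have hqv : q ⬝ᵥ v = 0 := by
    rw [hq, mulVec_dotProduct_of_isSymm hx, hxv, dotProduct_zero]
  have hvv : v ⬝ᵥ v = 0 := by
    nth_rw 1 [hv]; rw [mulVec_dotProduct_of_isSymm hx, hxv, dotProduct_zero]
  have hvp : v ⬝ᵥ p = 1 := by rw [dotProduct_comm, hpv]
  have hs := isOrthProj_symMulVec hvp hvv hpp
  have hQ := isOrthProj_vecMulVec_self hqq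
  have hQs : vecMulVec q q * symMulVec v p = 0 := mul_symMulVec_eq_zero
    (by rw [vecMulVec_self_mulVec, hqv, zero_smul])
    (by rw [vecMulVec_self_mulVec, dotProduct_comm, hpq, zero_smul])
  have hrank := (hQ.add hs hQs).rank_add_rank_one_sub
  rw [hQ.rank_add hs hQs, rank_symMulVec hvp hvv hpp, rank_vecMulVec_self hqq,
    Fintype.card_fin] at hrank
  obtain ⟨d, hd, hg⟩ := (hQ.add hs hQs).one_sub.exists_eq_vecMulVec_self (by omega)
  have hsum : symMulVec v p + vecMulVec q q + vecMulVec d d = 1 := by rw [← hg]; abel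
  have hx_eq := eq_symMulVec_of_cube_eq_zero hx hx3 hq hv hsum hd
  have hxx : x * x = vecMulVec v v := calc
    x * x = x * symMulVec v q := congrArg (x * ·) hx_eq
    _ = vecMulVec v v := by rw [mul_symMulVec, ← hv, hxv, zero_vecMulVec, zero_add]
  exact isCongruentTo_net3a hL hsum h1L (hx_eq ▸ hxL) (hxx ▸ hxxL)

section SquareZeroPairs

variable {K n : Type*} [Field K]

theorem linearIndependent_pair_of_vecMulVec_self {a b : n → K}
    (h : LinearIndependent K ![vecMulVec a a, vecMulVec b b]) : LinearIndependent K ![a, b] := by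
  have ha : a ≠ 0 := by rintro rfl; exact h.ne_zero 0 (vecMulVec_zero 0)
  rw [LinearIndependent.pair_iff' ha]
  rintro c rfl
  rw [LinearIndependent.pair_iff' (vecMulVec_ne_zero ha ha)] at h
  exact h (c * c) (by rw [smul_vecMulVec, vecMulVec_smul, smul_smul])

theorem exists_sub_smul_eq_vecMulVec_self [IsAlgClosed K] [NeZero (2 : K)] (α β γ : K)
    (v l : n → K) :
    ∃ s p q : K, α • vecMulVec v v + β • symMulVec v l + γ • vecMulVec l l -
      s • (vecMulVec v v + vecMulVec l l) = vecMulVec (p • v + q • l) (p • v + q • l) := by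
  have h2 : (2 : K) ≠ 0 := two_ne_zero
  -- `s` is an eigenvalue of `!![α, β; β, γ]`, so the difference is a quadratic form of rank `≤ 1`.
  obtain ⟨D, hD⟩ := IsAlgClosed.exists_pow_nat_eq ((α - γ) ^ 2 + 4 * β ^ 2) two_pos
  obtain ⟨s, hs⟩ : ∃ s, s = (α + γ + D) / 2 := ⟨_, rfl⟩
  have hdet : (α - s) * (γ - s) = β ^ 2 := by
    rw [hs]; field_simp; linear_combination hD
  obtain ⟨p, hp⟩ := IsAlgClosed.exists_pow_nat_eq (α - s) two_pos
  obtain ⟨q, hq⟩ := IsAlgClosed.exists_pow_nat_eq (γ - s) two_pos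
  have hpq : (p * q) ^ 2 = β ^ 2 := by rw [mul_pow, hp, hq, hdet]
  obtain ⟨q, hq, hpq⟩ : ∃ q, q ^ 2 = γ - s ∧ p * q = β := by
    obtain h | h := sq_eq_sq_iff_eq_or_eq_neg.1 hpq
    · exact ⟨q, hq, h⟩
    · exact ⟨-q, by rw [neg_sq, hq], by rw [mul_neg, h, neg_neg]⟩
  refine ⟨s, p, q, ?_⟩
  simp only [symMulVec, add_vecMulVec, vecMulVec_add, smul_vecMulVec, vecMulVec_smul]
  linear_combination (norm := module) -hp • vecMulVec v v - hq • vecMulVec l l -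
    hpq • (vecMulVec v l + vecMulVec l v)

variable [Fintype n]

theorem dotProduct_eq_zero_of_vecMulVec_self_anticomm {a b : n → K}
    (hab : LinearIndependent K ![a, b])
    (h : vecMulVec a a * vecMulVec b b + vecMulVec b b * vecMulVec a a = 0) : a ⬝ᵥ b = 0 := by
  rw [vecMulVec_mul_vecMulVec, vecMulVec_mul_vecMulVec, dotProduct_comm b a, vecMulVec_smul,
    vecMulVec_smul] at h
  exact (eq_zero_of_vecMulVec_pair_combination_eq_zero hab (α := 0) (β := a ⬝ᵥ b)
    (γ := a ⬝ᵥ b) (δ := 0) (by rw [zero_smul, zero_smul, zero_add, add_zero, h])).2.1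

theorem exists_isotropic_pair_of_mul_self_eq_zero [IsAlgClosed K] [NeZero (2 : K)]
    (hn : Fintype.card n ≤ 5) {x : Matrix n n K} (hx : x.IsSymm) (hxx : x * x = 0)
    (hsq : ∀ u, x ≠ vecMulVec u u) :
    ∃ v l, x = vecMulVec v v + vecMulVec l l ∧ LinearIndependent K ![v, l] ∧
      v ⬝ᵥ v = 0 ∧ l ⬝ᵥ l = 0 ∧ v ⬝ᵥ l = 0 := by
  have hrank := rank_add_rank_le_card_of_mul_eq_zero hxx
  obtain ⟨v, l, rfl⟩ := exists_eq_vecMulVec_self_add_of_rank_le_two hx (by omega)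
  have hv0 : v ≠ 0 := by
    rintro rfl
    exact hsq l (by rw [zero_vecMulVec, zero_add])
  have hvl : LinearIndependent K ![v, l] := by
    rw [LinearIndependent.pair_iff' hv0]
    rintro c rfl
    obtain ⟨s, hs⟩ := IsAlgClosed.exists_pow_nat_eq (1 + c * c) two_pos
    refine hsq (s • v) ?_
    simp only [smul_vecMulVec, vecMulVec_smul, smul_smul, ← pow_two s, hs]
    module
  refine ⟨v, l, rfl, hvl, ?_⟩
  obtain ⟨hvv, hvl0, -, hll⟩ := eq_zero_of_vecMulVec_pair_combination_eq_zero hvl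
    (α := v ⬝ᵥ v) (β := v ⬝ᵥ l) (γ := v ⬝ᵥ l) (δ := l ⬝ᵥ l) (by
      rw [← hxx]
      simp only [add_mul, mul_add, vecMulVec_mul_vecMulVec, vecMulVec_smul, dotProduct_comm l v]
      abel)
  exact ⟨hvv, hll, hvl0⟩

theorem mulVec_eq_zero_of_anticomm [DecidableEq n] [NeZero (2 : K)]
    {v l w m : n → K} {y : Matrix n n K} (hvl : LinearIndependent K ![v, l]) (hvv : v ⬝ᵥ v = 0)
    (hll : l ⬝ᵥ l = 0) (hvl0 : v ⬝ᵥ l = 0) (h1 : symMulVec v w + symMulVec l m = 1)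
    (hy : y.IsSymm) (hyy : y * y = 0)
    (hxy : (vecMulVec v v + vecMulVec l l) * y + y * (vecMulVec v v + vecMulVec l l) = 0) :
    y *ᵥ v = 0 ∧ y *ᵥ l = 0 := by
  obtain ⟨hvw, hvm, hlw, hlm⟩ :=
    dotProduct_of_symMulVec_add_symMulVec_eq_one hvl hvv hll hvl0 h1
  have h2 : (2 : K) ≠ 0 := two_ne_zero
  simp only [add_mul, mul_add, vecMulVec_self_mul_of_isSymm hy, mul_vecMulVec] at hxy
  have happly (z : n → K) : (y *ᵥ v ⬝ᵥ z) • v + (y *ᵥ l ⬝ᵥ z) • l +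
      ((v ⬝ᵥ z) • y *ᵥ v + (l ⬝ᵥ z) • y *ᵥ l) = 0 := by
    simpa only [add_mulVec, vecMulVec_mulVec, op_smul_eq_smul, zero_mulVec] using congr($hxy *ᵥ z)
  obtain ⟨a, b, hyv⟩ : ∃ a b : K, y *ᵥ v = a • v + b • l := by
    have := happly w
    rw [hvw, hlw, one_smul, zero_smul, add_zero] at this
    exact ⟨-(y *ᵥ v ⬝ᵥ w), -(y *ᵥ l ⬝ᵥ w), by linear_combination (norm := module) this⟩
  obtain ⟨c, d, hyl⟩ : ∃ c d : K, y *ᵥ l = c • v + d • l := by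
    have := happly m
    rw [hvm, hlm, one_smul, zero_smul, zero_add] at this
    exact ⟨-(y *ᵥ v ⬝ᵥ m), -(y *ᵥ l ⬝ᵥ m), by linear_combination (norm := module) this⟩
  obtain ⟨ha, hbc, -, hd⟩ := eq_zero_of_vecMulVec_pair_combination_eq_zero hvl
    (α := 2 * a) (β := b + c) (γ := b + c) (δ := 2 * d) (by
      rw [← hxy, hyv, hyl]
      simp only [vecMulVec_add, add_vecMulVec, vecMulVec_smul, smul_vecMulVec]
      module)
  rw [(mul_eq_zero.1 ha).resolve_left h2, zero_smul, zero_add] at hyv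
  rw [(mul_eq_zero.1 hd).resolve_left h2, zero_smul, add_zero, eq_neg_of_add_eq_zero_right hbc]
    at hyl
  have hb : b = 0 := by
    have h : y *ᵥ y *ᵥ v = 0 := by rw [mulVec_mulVec, hyy, zero_mulVec]
    rw [hyv, mulVec_smul, hyl, smul_smul, smul_eq_zero] at h
    simpa using h.resolve_right (hvl.ne_zero 0)
  rw [hb] at hyv hyl
  exact ⟨by rw [hyv, zero_smul], by rw [hyl, neg_zero, zero_smul]⟩

theorem exists_eq_combination_of_mulVec_eq_zero [DecidableEq n] {v l w m : n → K}
    {y : Matrix n n K} (h1 : symMulVec v w + symMulVec l m = 1) (hy : y.IsSymm)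
    (hyv : y *ᵥ v = 0) (hyl : y *ᵥ l = 0) :
    ∃ α β γ : K, y = α • vecMulVec v v + β • symMulVec v l + γ • vecMulVec l l := by
  have hy_eq : y = vecMulVec v (y *ᵥ w) + vecMulVec l (y *ᵥ m) := by
    conv_lhs => rw [← Matrix.one_mul y, ← h1]
    rw [add_mul, symMulVec_mul_of_isSymm hy, symMulVec_mul_of_isSymm hy, hyv, hyl, vecMulVec_zero,
      vecMulVec_zero, add_zero, add_zero]
  have happly (z : n → K) : y *ᵥ z = (y *ᵥ w ⬝ᵥ z) • v + (y *ᵥ m ⬝ᵥ z) • l := by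
    conv_lhs => rw [hy_eq]
    rw [add_mulVec, vecMulVec_mulVec, vecMulVec_mulVec, op_smul_eq_smul, op_smul_eq_smul]
  have hmw : y *ᵥ w ⬝ᵥ m = y *ᵥ m ⬝ᵥ w := by
    rw [mulVec_dotProduct_of_isSymm hy, dotProduct_comm]
  obtain ⟨α, β, γ, hyw, hym⟩ :
      ∃ α β γ : K, y *ᵥ w = α • v + β • l ∧ y *ᵥ m = β • v + γ • l :=
    ⟨_, _, _, happly w, hmw ▸ happly m⟩
  refine ⟨α, β, γ, ?_⟩
  rw [hy_eq, hyw, hym]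
  simp only [vecMulVec_add, vecMulVec_smul, symMulVec]
  module

end SquareZeroPairs

section NilpotentPlane

variable {L : Submodule ℂ (Mat 4)}

theorem isCongruentTo_net3b1_of_vecMulVec_self (hL : Module.finrank ℂ L = 3) {a b : Fin 4 → ℂ}
    (hab : LinearIndependent ℂ ![a, b]) (haa : a ⬝ᵥ a = 0) (hbb : b ⬝ᵥ b = 0)
    (hab0 : a ⬝ᵥ b = 0) (h1L : 1 ∈ L) (haL : vecMulVec a a ∈ L) (hbL : vecMulVec b b ∈ L) :
    IsCongruentTo L net3b1 := by
  obtain ⟨w, m, h1⟩ := exists_symMulVec_add_symMulVec_eq_one (Fintype.card_fin 4) hab haa hbb hab0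
  exact isCongruentTo_net3b1 hL h1 h1L haL hbL

theorem isCongruentTo_net3b2_of_vecMulVec_self (hL : Module.finrank ℂ L = 3) {a b : Fin 4 → ℂ}
    (hab : LinearIndependent ℂ ![a, b]) (haa : a ⬝ᵥ a = 0) (hbb : b ⬝ᵥ b = 0)
    (hab0 : a ⬝ᵥ b = 0) (h1L : 1 ∈ L) (haL : vecMulVec a a ∈ L) (habL : symMulVec a b ∈ L) :
    IsCongruentTo L net3b2 := by
  obtain ⟨w, m, h1⟩ := exists_symMulVec_add_symMulVec_eq_one (Fintype.card_fin 4) hab haa hbb hab0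
  exact isCongruentTo_net3b2 hL (by rw [symMulVec_comm m, h1]) h1L haL habL

theorem isCongruentTo_net3b_of_vecMulVec_self_mem (hL : Module.finrank ℂ L = 3)
    {v l : Fin 4 → ℂ} {p q : ℂ} (hvl : LinearIndependent ℂ ![v, l]) (hvv : v ⬝ᵥ v = 0)
    (hll : l ⬝ᵥ l = 0) (hvl0 : v ⬝ᵥ l = 0) (hk0 : p • v + q • l ≠ 0) (h1L : 1 ∈ L)
    (hxL : vecMulVec v v + vecMulVec l l ∈ L)
    (hkL : vecMulVec (p • v + q • l) (p • v + q • l) ∈ L) :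
    IsCongruentTo L net3b1 ∨ IsCongruentTo L net3b2 := by
  have hiso (r s r' s' : ℂ) : (r • v + s • l) ⬝ᵥ (r' • v + s' • l) = 0 := by
    simp only [dotProduct_add, add_dotProduct, dotProduct_smul, smul_dotProduct, hvv, hll, hvl0,
      dotProduct_comm l v, smul_zero, add_zero]
  -- The rotated vectors `k = p v + q l` and `m = -q v + p l` satisfy
  -- `k kᵀ + m mᵀ = (p² + q²) (v vᵀ + l lᵀ)`; if `p² + q² = 0`, the symmetrised
  -- product of `k` with `p v - q l` is `2 p² (v vᵀ + l lᵀ)` instead.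
  obtain hpq | hpq := ne_or_eq (p * p + q * q) 0
  · refine .inl <| isCongruentTo_net3b1_of_vecMulVec_self hL (b := (-q) • v + p • l)
      ((LinearIndependent.pair_add_smul_add_smul_iff ..).2 ⟨hvl, fun h ↦ hpq (by
        linear_combination h)⟩)
      (hiso ..) (hiso ..) (hiso ..) h1L hkL ?_
    convert L.sub_mem (L.smul_mem (p * p + q * q) hxL) hkL using 1
    simp only [add_vecMulVec, vecMulVec_add, smul_vecMulVec, vecMulVec_smul]
    module
  · have hp0 : p ≠ 0 := by
      rintro rfl
      have hq : q = 0 := by simpa using hpq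
      simp [hq] at hk0
    have hq0 : q ≠ 0 := by
      rintro rfl
      exact hp0 (by simpa using hpq)
    refine .inr <| isCongruentTo_net3b2_of_vecMulVec_self hL (b := p • v + (-q) • l)
      ((LinearIndependent.pair_add_smul_add_smul_iff ..).2 ⟨hvl, fun h ↦ ?_⟩)
      (hiso ..) (hiso ..) (hiso ..) h1L hkL ?_
    · exact mul_ne_zero (two_ne_zero' ℂ) (mul_ne_zero hp0 hq0) (by linear_combination -h)
    · convert L.smul_mem (2 * (p * p)) hxL using 1
      simp only [symMulVec, add_vecMulVec, vecMulVec_add, smul_vecMulVec, vecMulVec_smul]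
      linear_combination (norm := module) -(2 * hpq) • vecMulVec l l

theorem isCongruentTo_net3b_of_ne_vecMulVec_self (hL : Module.finrank ℂ L = 3) {x y : Mat 4}
    (hx : x.IsSymm) (hy : y.IsSymm) (hxy : LinearIndependent ℂ ![x, y]) (hxx : x * x = 0)
    (hyy : y * y = 0) (hanti : x * y + y * x = 0) (hsq : ∀ u, x ≠ vecMulVec u u)
    (h1L : 1 ∈ L) (hxL : x ∈ L) (hyL : y ∈ L) :
    IsCongruentTo L net3b1 ∨ IsCongruentTo L net3b2 := by
  obtain ⟨v, l, rfl, hvl, hvv, hll, hvl0⟩ :=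
    exists_isotropic_pair_of_mul_self_eq_zero (by simp) hx hxx hsq
  obtain ⟨w, m, h1⟩ := exists_symMulVec_add_symMulVec_eq_one (Fintype.card_fin 4) hvl hvv hll hvl0
  obtain ⟨hyv, hyl⟩ := mulVec_eq_zero_of_anticomm hvl hvv hll hvl0 h1 hy hyy hanti
  obtain ⟨α, β, γ, hy_eq⟩ := exists_eq_combination_of_mulVec_eq_zero h1 hy hyv hyl
  obtain ⟨s, p, q, hs⟩ := exists_sub_smul_eq_vecMulVec_self α β γ v l
  rw [← hy_eq] at hs
  refine isCongruentTo_net3b_of_vecMulVec_self_mem hL (p := p) (q := q) hvl hvv hll hvl0 ?_ h1L hxL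
    (hs ▸ L.sub_mem hyL (L.smul_mem s hxL))
  intro hk
  rw [hk, zero_vecMulVec, sub_eq_zero] at hs
  exact (LinearIndependent.pair_iff' (hxy.ne_zero 0)).1 hxy s hs.symm

theorem isCongruentTo_net3b_of_anticomm (hL : Module.finrank ℂ L = 3) {x y : Mat 4}
    (hx : x.IsSymm) (hy : y.IsSymm) (hxy : LinearIndependent ℂ ![x, y]) (hxx : x * x = 0)
    (hyy : y * y = 0) (hanti : x * y + y * x = 0) (h1L : 1 ∈ L) (hxL : x ∈ L) (hyL : y ∈ L) :
    IsCongruentTo L net3b1 ∨ IsCongruentTo L net3b2 := by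
  by_cases hxsq : ∀ u, x ≠ vecMulVec u u
  · exact isCongruentTo_net3b_of_ne_vecMulVec_self hL hx hy hxy hxx hyy hanti hxsq h1L hxL hyL
  by_cases hysq : ∀ u, y ≠ vecMulVec u u
  · exact isCongruentTo_net3b_of_ne_vecMulVec_self hL hy hx (LinearIndependent.pair_symm_iff.1 hxy)
      hyy hxx (by rw [add_comm, hanti]) hysq h1L hyL hxL
  push Not at hxsq hysq
  obtain ⟨a, rfl⟩ := hxsq
  obtain ⟨b, rfl⟩ := hysq
  have hab := linearIndependent_pair_of_vecMulVec_self hxy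
  exact .inl <| isCongruentTo_net3b1_of_vecMulVec_self hL hab
    (dotProduct_self_eq_zero_of_vecMulVec_self_mul_self hxx)
    (dotProduct_self_eq_zero_of_vecMulVec_self_mul_self hyy)
    (dotProduct_eq_zero_of_vecMulVec_self_anticomm hab hanti) h1L hxL hyL

end NilpotentPlane

/-- The Jordan subalgebras of `(Sⁿ, •_U)`: the subspaces of symmetric matrices that contain the
unit `U` and are closed under `jmul U`. -/
structure IsJordanSubalgebra {n : ℕ} (U : Mat n) (L : Submodule ℂ (Mat n)) : Prop where
  isSymm : ∀ X ∈ L, X.IsSymm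
  unit_mem : U ∈ L
  jmul_mem : ∀ X ∈ L, ∀ Y ∈ L, jmul U X Y ∈ L

namespace IsJordanSubalgebra

variable {n : ℕ} {L : Submodule ℂ (Mat n)} {X Y : Mat n}

theorem map {U P : Mat n} (hL : IsJordanSubalgebra U L) (hP : IsUnit P.det) :
    IsJordanSubalgebra (congMap P U) (L.map (congMap P)) where
  isSymm := by
    rintro _ ⟨X, hX, rfl⟩
    exact isSymm_congMap P (hL.isSymm X hX)
  unit_mem := Submodule.mem_map_of_mem hL.unit_mem
  jmul_mem := by
    rintro _ ⟨X, hX, rfl⟩ _ ⟨Y, hY, rfl⟩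
    exact congMap_jmul hP X Y ▸ Submodule.mem_map_of_mem (hL.jmul_mem X hX Y hY)

theorem mul_add_mul_mem (hL : IsJordanSubalgebra 1 L) (hX : X ∈ L) (hY : Y ∈ L) :
    X * Y + Y * X ∈ L := by
  convert L.smul_mem 2 (hL.jmul_mem X hX Y hY) using 1
  rw [jmul, smul_smul, inv_one, Matrix.mul_one, Matrix.mul_one]
  norm_num

theorem mul_self_mem (hL : IsJordanSubalgebra 1 L) (hX : X ∈ L) : X * X ∈ L := by
  convert L.smul_mem (1 / 2) (hL.mul_add_mul_mem hX hX) using 1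
  module

theorem mul_self_mul_mem (hL : IsJordanSubalgebra 1 L) (hX : X ∈ L) : X * X * X ∈ L := by
  convert L.smul_mem (1 / 2) (hL.mul_add_mul_mem (hL.mul_self_mem hX) hX) using 1
  rw [Matrix.mul_assoc]
  module

end IsJordanSubalgebra

section Cubic

theorem span_range_eq_of_linearIndependent {K V ι : Type*} [Field K] [AddCommGroup V] [Module K V]
    [Fintype ι] {L : Submodule K V} [FiniteDimensional K L] {v : ι → V}
    (hv : LinearIndependent K v) (hmem : ∀ i, v i ∈ L)
    (hL : Module.finrank K L = Fintype.card ι) : Submodule.span K (Set.range v) = L :=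
  Submodule.eq_of_le_of_finrank_eq (Submodule.span_le.2 (Set.range_subset_iff.2 hmem))
    (by rw [finrank_span_eq_card hv, hL])

variable {K A : Type*} [Field K] [Ring A] [Algebra K A]

theorem sub_smul_one_mul_sub_smul_one (X : A) (a b : K) :
    (X - a • 1) * (X - b • 1) = X * X - (a + b) • X + (a * b) • 1 := by
  simp only [sub_mul, mul_sub, smul_mul_assoc, mul_smul_comm, mul_one, one_mul]
  module

theorem commute_sub_smul_one (X : A) (a b : K) : Commute (X - a • 1) (X - b • 1) := by
  rw [Commute, SemiconjBy, sub_smul_one_mul_sub_smul_one, sub_smul_one_mul_sub_smul_one, add_comm a,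
    mul_comm a]

theorem sub_smul_one_mul_sub_smul_one_ne_zero {X : A}
    (hX : X * X ∉ Submodule.span K {1, X}) (r s : K) :
    (X - r • 1) * (X - s • 1) ≠ 0 := by
  rw [sub_smul_one_mul_sub_smul_one]
  refine fun h ↦ hX (Submodule.mem_span_pair.2 ⟨-(r * s), r + s, ?_⟩)
  linear_combination (norm := module) -h

theorem lagrange_sum_eq_one (X : A) {r s t : K}
    (hrs : r ≠ s) (hrt : r ≠ t) (hst : s ≠ t) :
    ((r - s) * (r - t))⁻¹ • ((X - s • 1) * (X - t • 1)) +
      ((s - t) * (s - r))⁻¹ • ((X - t • 1) * (X - r • 1)) +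
      ((t - r) * (t - s))⁻¹ • ((X - r • 1) * (X - s • 1)) = 1 := by
  have := sub_ne_zero.2 hrs
  have := sub_ne_zero.2 hrt
  have := sub_ne_zero.2 hst
  have := sub_ne_zero.2 hrs.symm
  have := sub_ne_zero.2 hrt.symm
  have := sub_ne_zero.2 hst.symm
  simp only [sub_smul_one_mul_sub_smul_one]
  match_scalars <;> field_simp <;> ring

theorem rotate_sub_smul_one_mul_eq_zero {x : A} {r s t : K}
    (h : (x - r • 1) * ((x - s • 1) * (x - t • 1)) = 0) :
    (x - s • 1) * ((x - t • 1) * (x - r • 1)) = 0 := by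
  rw [← mul_assoc, ← h, ((commute_sub_smul_one x r s).mul_right (commute_sub_smul_one x r t)).eq]

open Polynomial in
theorem exists_sub_smul_one_mul_eq_zero [IsAlgClosed K] {x : A}
    (h : x * x * x ∈ Submodule.span K {x * x, 1, x}) :
    ∃ r s t : K, (x - r • 1) * ((x - s • 1) * (x - t • 1)) = 0 := by
  obtain ⟨a, b, c, h⟩ := Submodule.mem_span_triple.1 h
  let P : K[X] := X ^ 3 - (C a * X ^ 2 + C c * X + C b)
  have hdeg : P.natDegree = 3 := by simp only [P]; compute_degree!
  have hmonic : P.Monic := by simp only [P]; monicity!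
  have hsplits := IsAlgClosed.splits P
  obtain ⟨r, s, t, hroots⟩ := Multiset.card_eq_three.1 (hsplits.natDegree_eq_card_roots ▸ hdeg)
  have hP : P = (X - C r) * ((X - C s) * (X - C t)) := by
    conv_lhs => rw [hsplits.eq_prod_roots_of_monic hmonic, hroots]
    simp
  refine ⟨r, s, t, ?_⟩
  have hx : aeval x P = 0 := by
    simp only [P, map_sub, map_add, map_mul, map_pow, aeval_X, aeval_C,
      Algebra.algebraMap_eq_smul_one, smul_one_mul]
    rw [pow_three', pow_two, ← h]
    abel
  simpa [hP, Algebra.algebraMap_eq_smul_one] using hx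

end Cubic

section Quadratic

variable {K A : Type*} [Field K] [Ring A] [Algebra K A]

theorem exists_sub_smul_one_mul_self_eq_smul_one [NeZero (2 : K)] {x : A}
    (h : x * x ∈ Submodule.span K {1, x}) :
    ∃ c p : K, (x - c • 1) * (x - c • 1) = p • 1 := by
  obtain ⟨a, b, h⟩ := Submodule.mem_span_pair.1 h
  refine ⟨b / 2, a + b / 2 * (b / 2), ?_⟩
  rw [sub_smul_one_mul_sub_smul_one, ← h, add_halves]
  module

theorem exists_mul_self_eq_smul_one_notMem [NeZero (2 : K)] {L S : Submodule K A} (hLS : ¬ L ≤ S)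
    (h1L : 1 ∈ L) (h1S : 1 ∈ S) (hquad : ∀ x ∈ L, x * x ∈ Submodule.span K {1, x}) :
    ∃ x ∈ L, x ∉ S ∧ ∃ p : K, x * x = p • 1 := by
  obtain ⟨x, hxL, hxS⟩ := SetLike.not_le_iff_exists.1 hLS
  obtain ⟨c, p, hx⟩ := exists_sub_smul_one_mul_self_eq_smul_one (hquad x hxL)
  exact ⟨x - c • 1, L.sub_mem hxL (L.smul_mem c h1L),
    fun h ↦ hxS ((S.sub_mem_iff_left (S.smul_mem c h1S)).1 h), p, hx⟩

theorem exists_mul_add_mul_eq_smul_one [NeZero (2 : K)] {x y : A} {p q : K}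
    (hli : LinearIndependent K ![y, x, 1]) (hxx : x * x = p • 1) (hyy : y * y = q • 1)
    (hadd : (x + y) * (x + y) ∈ Submodule.span K {1, x + y})
    (hsub : (x - y) * (x - y) ∈ Submodule.span K {1, x - y}) :
    ∃ α : K, x * y + y * x = α • 1 := by
  obtain ⟨a, b, hab⟩ := Submodule.mem_span_pair.1 hadd
  obtain ⟨c, d, hcd⟩ := Submodule.mem_span_pair.1 hsub
  simp only [add_mul, mul_add, sub_mul, mul_sub, hxx, hyy] at hab hcd
  have hb : x * y + y * x = (a - p - q) • 1 + b • (x + y) := by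
    linear_combination (norm := module) -hab
  have hd : x * y + y * x = (p + q - c) • 1 - d • (x - y) := by
    linear_combination (norm := module) hcd
  have hcoeff := Fintype.linearIndependent_iff.1 hli ![b - d, b + d, (a - p - q) - (p + q - c)] (by
    simp only [Fin.sum_univ_three, cons_val]
    linear_combination (norm := module) hd - hb)
  have hb0 : 2 * b = 0 := by
    linear_combination (by simpa using hcoeff 0 : b - d = 0) + (by simpa using hcoeff 1 : b + d = 0)
  obtain rfl : b = 0 := (mul_eq_zero_iff_left two_ne_zero).1 hb0
  exact ⟨a - p - q, by rw [hb, zero_smul, add_zero]⟩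

theorem exists_mul_self_eq_zero_of_quadratic [IsAlgClosed K] [NeZero (2 : K)] {L : Submodule K A}
    {x y : A} {p q α : K} (hli : LinearIndependent K ![x, y]) (hxL : x ∈ L) (hyL : y ∈ L)
    (hxx : x * x = p • 1) (hyy : y * y = q • 1) (hxy : x * y + y * x = α • 1) :
    ∃ x ∈ L, ∃ y ∈ L, LinearIndependent K ![x, y] ∧ y * y = 0 ∧
      ∃ p α : K, x * x = p • 1 ∧ x * y + y * x = α • 1 := by
  obtain rfl | hq := eq_or_ne q 0
  · exact ⟨x, hxL, y, hyL, hli, by rw [hyy, zero_smul], p, α, hxx, hxy⟩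
  · obtain ⟨s, hs⟩ := IsAlgClosed.exists_eq_mul_self (discrim q α p)
    obtain ⟨t, ht⟩ := exists_quadratic_eq_zero hq ⟨s, hs⟩
    refine ⟨y, hyL, x + t • y, L.add_mem hxL (L.smul_mem t hyL), ?_, ?_, q, α + 2 * (t * q), hyy,
      ?_⟩
    · rw [add_comm]
      exact (LinearIndependent.pair_add_smul_right_iff t).2 (LinearIndependent.pair_symm_iff.1 hli)
    · calc (x + t • y) * (x + t • y) = x * x + t • (x * y + y * x) + (t * t) • (y * y) := by
            simp only [add_mul, mul_add, smul_mul_assoc, mul_smul_comm]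
            module
        _ = (q * (t * t) + α * t + p) • 1 := by
            rw [hxx, hxy, hyy]
            module
        _ = 0 := by rw [ht, zero_smul]
    · calc y * (x + t • y) + (x + t • y) * y = (x * y + y * x) + (2 * t) • (y * y) := by
            simp only [add_mul, mul_add, smul_mul_assoc, mul_smul_comm]
            module
        _ = (α + 2 * (t * q)) • 1 := by
            rw [hxy, hyy]
            module

theorem exists_linearIndependent_mul_self_eq_zero [IsAlgClosed K] [NeZero (2 : K)]
    {L : Submodule K A} (hdim : 2 < Module.finrank K L) (h1 : (1 : A) ≠ 0) (h1L : 1 ∈ L)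
    (hquad : ∀ x ∈ L, x * x ∈ Submodule.span K {1, x}) :
    ∃ x ∈ L, ∃ y ∈ L, LinearIndependent K ![x, y] ∧ y * y = 0 ∧
      ∃ p α : K, x * x = p • 1 ∧ x * y + y * x = α • 1 := by
  have hnle (s : Finset A) (hs : s.card ≤ 2) : ¬ L ≤ Submodule.span K s := fun hle ↦
    (hdim.trans_le ((Submodule.finrank_mono hle).trans (finrank_span_finset_le_card s))).not_ge hs
  obtain ⟨x, hxL, hx, p, hxx⟩ := exists_mul_self_eq_smul_one_notMem (S := Submodule.span K {1})
    (by simpa using hnle {1} (by simp)) h1L (Submodule.mem_span_of_mem (by simp)) hquad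
  obtain ⟨y, hyL, hy, q, hyy⟩ := exists_mul_self_eq_smul_one_notMem (S := Submodule.span K {1, x})
    (by classical simpa using hnle {1, x} Finset.card_le_two) h1L
    (Submodule.mem_span_of_mem (by simp)) hquad
  have hli : LinearIndependent K ![y, x, 1] := by
    refine linearIndependent_finCons.2 ⟨linearIndependent_finCons.2 ⟨?_, ?_⟩, ?_⟩
    · simpa using h1
    · simpa using hx
    · simpa using hy
  obtain ⟨α, hα⟩ := exists_mul_add_mul_eq_smul_one hli hxx hyy (hquad _ (L.add_mem hxL hyL))
    (hquad _ (L.sub_mem hxL hyL))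
  have hli' : LinearIndependent K ![x, y] := by
    convert hli.comp ![1, 0] (by decide) using 1
    ext i
    fin_cases i <;> rfl
  exact exists_mul_self_eq_zero_of_quadratic hli' hxL hyL hxx hyy hα

theorem exists_hyperbolic_partner_of_mul_add_mul_eq {L : Submodule K A} {x y : A} {p α : K}
    (hxL : x ∈ L) (hyL : y ∈ L) (hxx : x * x = p • 1) (hyy : y * y = 0)
    (hxy : x * y + y * x = α • 1) (hα : α ≠ 0) :
    ∃ z ∈ L, z * z = 0 ∧ z * y + y * z = 1 := by
  refine ⟨α⁻¹ • (x - (p / α) • y), L.smul_mem _ (L.sub_mem hxL (L.smul_mem _ hyL)), ?_, ?_⟩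
  · have hsq : (x - (p / α) • y) * (x - (p / α) • y) = 0 := by
      calc _ = x * x - (p / α) • (x * y + y * x) + (p / α * (p / α)) • (y * y) := by
            simp only [sub_mul, mul_sub, smul_mul_assoc, mul_smul_comm]
            module
        _ = 0 := by
            rw [hxx, hxy, hyy, smul_smul, div_mul_cancel₀ p hα, smul_zero, add_zero, sub_self]
    rw [smul_mul_smul_comm, hsq, smul_zero]
  · calc _ = α⁻¹ • (x * y + y * x) - (2 * α⁻¹ * (p / α)) • (y * y) := by
          simp only [sub_mul, mul_sub, smul_mul_assoc, mul_smul_comm, smul_sub]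
          module
      _ = 1 := by
          rw [hxy, hyy, smul_smul, inv_mul_cancel₀ hα, one_smul, smul_zero, sub_zero]

theorem isIdempotentElem_half_one_add [NeZero (2 : K)] {u : A} (hu : u * u = 1) :
    IsIdempotentElem ((1 / 2 : K) • (1 + u)) := by
  have hsq : (1 + u) * (1 + u) = (2 : K) • (1 + u) := by
    rw [mul_add, mul_one, add_mul, one_mul, hu]
    module
  rw [IsIdempotentElem, smul_mul_smul_comm, hsq, smul_smul, mul_assoc,
    one_div_mul_cancel two_ne_zero, mul_one]

theorem half_one_add_mul_add_mul [NeZero (2 : K)] {u v : A} (h : u * v + v * u = 0) :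
    (1 / 2 : K) • (1 + u) * v + v * (1 / 2 : K) • (1 + u) = v := by
  calc _ = (1 / 2 : K) • ((2 : K) • v + (u * v + v * u)) := by
        simp only [add_mul, mul_add, smul_mul_assoc, mul_smul_comm, one_mul, mul_one]
        module
    _ = v := by rw [h, add_zero, smul_smul, one_div_mul_cancel two_ne_zero, one_smul]

end Quadratic

section Lagrange

variable {K n : Type*} [Field K] [Fintype n] [DecidableEq n] {X : Matrix n n K}

theorem isSymm_sub_smul_one_mul_sub_smul_one (hX : X.IsSymm) (b c : K) :
    ((X - b • 1) * (X - c • 1)).IsSymm := by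
  rw [IsSymm, transpose_mul, transpose_sub, transpose_sub, hX.eq, transpose_smul, transpose_smul,
    transpose_one, (commute_sub_smul_one X b c).eq]

theorem isOrthProj_lagrange (hX : X.IsSymm) {a b c : K} (hab : a ≠ b) (hac : a ≠ c)
    (h : (X - a • 1) * ((X - b • 1) * (X - c • 1)) = 0) :
    IsOrthProj (((a - b) * (a - c))⁻¹ • ((X - b • 1) * (X - c • 1))) := by
  obtain ⟨g, hg⟩ : ∃ g, g = (X - b • 1) * (X - c • 1) := ⟨_, rfl⟩
  rw [← hg] at h ⊢
  have heigen (d : K) : (X - d • 1) * g = (a - d) • g := by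
    rw [sub_mul, smul_mul_assoc, one_mul] at h ⊢
    linear_combination (norm := module) h
  have hgg : g * g = ((a - b) * (a - c)) • g := by
    nth_rw 1 [hg]
    rw [Matrix.mul_assoc, heigen, mul_smul_comm, heigen, smul_smul, mul_comm (a - c)]
  refine ⟨(hg ▸ isSymm_sub_smul_one_mul_sub_smul_one hX b c).smul _, ?_⟩
  rw [IsIdempotentElem, smul_mul_smul_comm, hgg, smul_smul, mul_assoc,
    inv_mul_cancel₀ (mul_ne_zero (sub_ne_zero.2 hab) (sub_ne_zero.2 hac)), mul_one]

end Lagrange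

section Cyclic

variable {L : Submodule ℂ (Mat 4)} {X : Mat 4} {r s t : ℂ}

theorem IsJordanSubalgebra.sub_smul_one_mem (hJ : IsJordanSubalgebra 1 L) (hX : X ∈ L) (r : ℂ) :
    X - r • 1 ∈ L :=
  L.sub_mem hX (L.smul_mem r hJ.unit_mem)

theorem IsJordanSubalgebra.sub_smul_one_mul_sub_smul_one_mem (hJ : IsJordanSubalgebra 1 L)
    (hX : X ∈ L) (r s : ℂ) : (X - r • 1) * (X - s • 1) ∈ L := by
  rw [sub_smul_one_mul_sub_smul_one]
  exact L.add_mem (L.sub_mem (hJ.mul_self_mem hX) (L.smul_mem _ hX)) (L.smul_mem _ hJ.unit_mem)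

theorem isCongruentTo_net1a_of_distinct_roots (hL : Module.finrank ℂ L = 3)
    (hJ : IsJordanSubalgebra 1 L) (hX : X ∈ L) (hXX : X * X ∉ Submodule.span ℂ {1, X})
    (hrs : r ≠ s) (hrt : r ≠ t) (hst : s ≠ t)
    (h : (X - r • 1) * ((X - s • 1) * (X - t • 1)) = 0) : IsCongruentTo L net1a := by
  have hXs := hJ.isSymm X hX
  have hmem (a b : ℂ) := hJ.sub_smul_one_mul_sub_smul_one_mem hX a b
  have hne {a b c : ℂ} (hab : a ≠ b) (hac : a ≠ c) :
      ((a - b) * (a - c))⁻¹ • ((X - b • 1) * (X - c • 1)) ≠ 0 :=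
    smul_ne_zero (inv_ne_zero (mul_ne_zero (sub_ne_zero.2 hab) (sub_ne_zero.2 hac)))
      (sub_smul_one_mul_sub_smul_one_ne_zero hXX b c)
  have h' := rotate_sub_smul_one_mul_eq_zero h
  have h'' := rotate_sub_smul_one_mul_eq_zero h'
  exact isCongruentTo_net1a_of_isOrthProj hL (isOrthProj_lagrange hXs hrs hrt h)
    (isOrthProj_lagrange hXs hst hrs.symm h') (isOrthProj_lagrange hXs hrt.symm hst.symm h'')
    (lagrange_sum_eq_one X hrs hrt hst) (L.smul_mem _ (hmem s t)) (L.smul_mem _ (hmem t r))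
    (L.smul_mem _ (hmem r s)) (hne hrs hrt) (hne hst hrs.symm) (hne hrt.symm hst.symm)

theorem isCongruentTo_net2a_of_double_root (hL : Module.finrank ℂ L = 3)
    (hJ : IsJordanSubalgebra 1 L) (hX : X ∈ L) (hXX : X * X ∉ Submodule.span ℂ {1, X})
    (hsr : s ≠ r) (h : (X - s • 1) * ((X - r • 1) * (X - r • 1)) = 0) :
    IsCongruentTo L net2a1 ∨ IsCongruentTo L net2a2 := by
  have hXs := hJ.isSymm X hX
  have hmem (a b : ℂ) := hJ.sub_smul_one_mul_sub_smul_one_mem hX a b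
  have hne (a b : ℂ) := sub_smul_one_mul_sub_smul_one_ne_zero hXX a b
  have hcomm := commute_sub_smul_one X r s
  refine isCongruentTo_net2a_of_isOrthProj hL (isOrthProj_lagrange hXs hsr hsr h)
    (smul_ne_zero (inv_ne_zero (mul_self_ne_zero.2 (sub_ne_zero.2 hsr))) (hne r r))
    (isSymm_sub_smul_one_mul_sub_smul_one hXs s r) (hne s r) ?_ ?_ hJ.unit_mem
    (L.smul_mem _ (hmem r r)) (hmem s r)
  · rw [mul_assoc, hcomm.left_comm, h, mul_zero]
  · rw [smul_mul_assoc, (hcomm.mul_left hcomm).left_comm, ← mul_assoc, h, zero_mul, smul_zero]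

theorem isCongruentTo_net3a_of_triple_root (hL : Module.finrank ℂ L = 3)
    (hJ : IsJordanSubalgebra 1 L) (hX : X ∈ L) (hXX : X * X ∉ Submodule.span ℂ {1, X})
    (h : (X - r • 1) * ((X - r • 1) * (X - r • 1)) = 0) : IsCongruentTo L net3a := by
  have hmem := hJ.sub_smul_one_mem hX r
  exact isCongruentTo_net3a_of_nilpotent hL (hJ.isSymm _ hmem)
    (sub_smul_one_mul_sub_smul_one_ne_zero hXX r r) (by rw [mul_assoc, h]) hJ.unit_mem hmem
    (hJ.mul_self_mem hmem)

theorem IsJordanSubalgebra.span_eq (hL : Module.finrank ℂ L = 3) (hJ : IsJordanSubalgebra 1 L)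
    (hX : X ∈ L) (hXX : X * X ∉ Submodule.span ℂ {1, X}) :
    Submodule.span ℂ {X * X, 1, X} = L := by
  have hX1 : X ∉ Submodule.span ℂ {(1 : Mat 4)} := fun h ↦ by
    obtain ⟨c, rfl⟩ := Submodule.mem_span_singleton.1 h
    refine hXX (Submodule.mem_span_pair.2 ⟨c * c, 0, ?_⟩)
    rw [zero_smul, add_zero, smul_mul_smul_comm, mul_one]
  have hli : LinearIndependent ℂ ![X * X, X, 1] := by
    refine linearIndependent_finCons.2 ⟨linearIndependent_finCons.2 ⟨?_, ?_⟩, ?_⟩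
    · simp
    · simpa using hX1
    · simpa using hXX
  have hspan := span_range_eq_of_linearIndependent (L := L) hli
    (by simp [Fin.forall_fin_succ, hJ.mul_self_mem hX, hX, hJ.unit_mem]) (by simpa using hL)
  simpa [Set.insert_comm _ (X * X), Set.pair_comm X] using hspan

end Cyclic

section QuadraticCases

variable {L : Submodule ℂ (Mat 4)} {x y : Mat 4} {p α : ℂ}

theorem isCongruentTo_net1b_of_hyperbolic_pair (hL : Module.finrank ℂ L = 3)
    (hJ : IsJordanSubalgebra 1 L) (hx : x ∈ L) (hy : y ∈ L) (hxx : x * x = 0) (hyy : y * y = 0)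
    (hxy : x * y + y * x = 1) : IsCongruentTo L net1b := by
  have heL : (1 / 2 : ℂ) • (1 + (x + y)) ∈ L :=
    L.smul_mem _ (L.add_mem hJ.unit_mem (L.add_mem hx hy))
  have hrL : Complex.I • (x - y) ∈ L := L.smul_mem _ (L.sub_mem hx hy)
  have hadd : (x + y) * (x + y) = 1 := by
    rw [mul_add, add_mul, add_mul, hxx, hyy, zero_add, add_zero, add_comm, hxy]
  have hsub : (x - y) * (x - y) = -1 := by
    rw [← hxy, mul_sub, sub_mul, sub_mul, hxx, hyy]
    abel
  have hanti : (x + y) * (x - y) + (x - y) * (x + y) = 0 := by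
    simp only [mul_add, mul_sub, add_mul, sub_mul, hxx, hyy]
    abel
  refine isCongruentTo_net1b_of_involution hL
    ⟨hJ.isSymm _ heL, isIdempotentElem_half_one_add hadd⟩ (hJ.isSymm _ hrL) ?_
    (half_one_add_mul_add_mul ?_) hJ.unit_mem heL hrL
  · rw [smul_mul_smul_comm, Complex.I_mul_I, hsub, neg_smul_neg, one_smul]
  · rw [mul_smul_comm, smul_mul_assoc, ← smul_add, hanti, smul_zero]

theorem isCongruentTo_net2b_of_anticomm (hL : Module.finrank ℂ L = 3)
    (hJ : IsJordanSubalgebra 1 L) (hx : x ∈ L) (hy : y ∈ L) (hxx : x * x = p • 1) (hp : p ≠ 0)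
    (hy0 : y ≠ 0) (hyy : y * y = 0) (hxy : x * y + y * x = 0) : IsCongruentTo L net2b := by
  obtain ⟨s, rfl⟩ := IsAlgClosed.exists_eq_mul_self p
  have hss : s⁻¹ * s⁻¹ * (s * s) = 1 := by rw [← mul_inv, inv_mul_cancel₀ hp]
  have heL : (1 / 2 : ℂ) • (1 + s⁻¹ • x) ∈ L :=
    L.smul_mem _ (L.add_mem hJ.unit_mem (L.smul_mem _ hx))
  refine isCongruentTo_net2b_of_isOrthProj hL
    ⟨hJ.isSymm _ heL, isIdempotentElem_half_one_add ?_⟩ (hJ.isSymm y hy) hy0 hyy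
    (half_one_add_mul_add_mul ?_) hJ.unit_mem heL hy
  · rw [smul_mul_smul_comm, hxx, smul_smul, hss, one_smul]
  · rw [mul_smul_comm, smul_mul_assoc, ← smul_add, hxy, smul_zero]

end QuadraticCases

/-- The eight normal forms of Jordan nets in `S⁴`. -/
def jordanNets : Set (Submodule ℂ (Mat 4)) :=
  {net1a, net1b, net2a1, net2a2, net2b, net3a, net3b1, net3b2}

section Classification

variable {L : Submodule ℂ (Mat 4)}

theorem exists_jordanNets_of_mul_self_notMem (hL : Module.finrank ℂ L = 3)
    (hJ : IsJordanSubalgebra 1 L) {X : Mat 4} (hX : X ∈ L)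
    (hXX : X * X ∉ Submodule.span ℂ {1, X}) : ∃ N ∈ jordanNets, IsCongruentTo L N := by
  obtain ⟨r, s, t, h⟩ := exists_sub_smul_one_mul_eq_zero (K := ℂ) (x := X)
    (by rw [hJ.span_eq hL hX hXX]; exact hJ.mul_self_mul_mem hX)
  have h' := rotate_sub_smul_one_mul_eq_zero h
  have h'' := rotate_sub_smul_one_mul_eq_zero h'
  have hdouble {a b : ℂ} (hab : a ≠ b) (h : (X - a • 1) * ((X - b • 1) * (X - b • 1)) = 0) :
      ∃ N ∈ jordanNets, IsCongruentTo L N := by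
    obtain h2a1 | h2a2 := isCongruentTo_net2a_of_double_root hL hJ hX hXX hab h
    exacts [⟨net2a1, by simp [jordanNets], h2a1⟩, ⟨net2a2, by simp [jordanNets], h2a2⟩]
  obtain rfl | hrs := eq_or_ne r s
  · obtain rfl | hrt := eq_or_ne r t
    · exact ⟨net3a, by simp [jordanNets], isCongruentTo_net3a_of_triple_root hL hJ hX hXX h⟩
    · exact hdouble hrt.symm h''
  obtain rfl | hrt := eq_or_ne r t
  · exact hdouble hrs.symm h'
  obtain rfl | hst := eq_or_ne s t
  · exact hdouble hrs h
  · exact ⟨net1a, by simp [jordanNets],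
      isCongruentTo_net1a_of_distinct_roots hL hJ hX hXX hrs hrt hst h⟩

theorem exists_jordanNets_of_forall_mul_self_mem (hL : Module.finrank ℂ L = 3)
    (hJ : IsJordanSubalgebra 1 L) (hquad : ∀ X ∈ L, X * X ∈ Submodule.span ℂ {1, X}) :
    ∃ N ∈ jordanNets, IsCongruentTo L N := by
  obtain ⟨x, hx, y, hy, hxy, hyy, p, α, hxx, hα⟩ :=
    exists_linearIndependent_mul_self_eq_zero (by rw [hL]; norm_num) one_ne_zero hJ.unit_mem hquad
  have hy0 : y ≠ 0 := hxy.ne_zero 1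
  obtain rfl | hα0 := eq_or_ne α 0
  · rw [zero_smul] at hα
    obtain rfl | hp := eq_or_ne p 0
    · rw [zero_smul] at hxx
      obtain h3b1 | h3b2 := isCongruentTo_net3b_of_anticomm hL (hJ.isSymm x hx) (hJ.isSymm y hy) hxy
        hxx hyy hα hJ.unit_mem hx hy
      exacts [⟨net3b1, by simp [jordanNets], h3b1⟩, ⟨net3b2, by simp [jordanNets], h3b2⟩]
    · exact ⟨net2b, by simp [jordanNets],
        isCongruentTo_net2b_of_anticomm hL hJ hx hy hxx hp hy0 hyy hα⟩
  · obtain ⟨z, hz, hzz, hzy⟩ := exists_hyperbolic_partner_of_mul_add_mul_eq hx hy hxx hyy hα hα0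
    exact ⟨net1b, by simp [jordanNets], isCongruentTo_net1b_of_hyperbolic_pair hL hJ
      hz hy hzz hyy hzy⟩

theorem exists_jordanNets (hL : Module.finrank ℂ L = 3) (hJ : IsJordanSubalgebra 1 L) :
    ∃ N ∈ jordanNets, IsCongruentTo L N := by
  by_cases hquad : ∀ X ∈ L, X * X ∈ Submodule.span ℂ {1, X}
  · exact exists_jordanNets_of_forall_mul_self_mem hL hJ hquad
  · push Not at hquad
    obtain ⟨X, hX, hXX⟩ := hquad
    exact exists_jordanNets_of_mul_self_notMem hL hJ hX hXX

end Classification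

/-- Every Jordan net in `S⁴` (a `3`-dimensional Jordan subalgebra of `(S⁴, •_U)`
with invertible unit `U`) is congruent to one of the eight listed nets. -/
theorem stmt14 (U : Mat 4) (hU : IsUnit U.det)
    (L : Submodule ℂ (Mat 4)) (hsym : ∀ X ∈ L, Matrix.IsSymm X)
    (hUL : U ∈ L) (hclosed : ∀ X ∈ L, ∀ Y ∈ L, jmul U X Y ∈ L)
    (hdim : Module.finrank ℂ L = 3) :
    ∃ P : Mat 4, IsUnit P.det ∧
      (Submodule.map (congMap P) L = net1a ∨
       Submodule.map (congMap P) L = net1b ∨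
       Submodule.map (congMap P) L = net2a1 ∨
       Submodule.map (congMap P) L = net2a2 ∨
       Submodule.map (congMap P) L = net2b ∨
       Submodule.map (congMap P) L = net3a ∨
       Submodule.map (congMap P) L = net3b1 ∨
       Submodule.map (congMap P) L = net3b2) := by
  obtain ⟨P, hP, hPU⟩ := exists_congMap_eq_one hU (hsym U hUL)
  have hJ : IsJordanSubalgebra 1 (L.map (congMap P)) :=
    hPU ▸ IsJordanSubalgebra.map ⟨hsym, hUL, hclosed⟩ hP
  have hdim' : Module.finrank ℂ (L.map (congMap P)) = 3 := by
    rw [← hdim, (L.equivMapOfInjective _ (congMap_injective hP)).finrank_eq]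
  obtain ⟨N, hN, hLN⟩ := exists_jordanNets hdim' hJ
  obtain ⟨Q, hQ, hQN⟩ := IsCongruentTo.trans ⟨P, hP, rfl⟩ hLN
  exact ⟨Q, hQ, by simpa [jordanNets, ← hQN] using hN⟩
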